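/- Let M be a von Neumann algebra with a faithful normal positive functional 𝔤 on M. Then the following are equivalent: (i) M is finite; (ii) every normal positive functional on M is absolutely continuous with respect to 𝔤. -/

import Mathlib

open scoped ComplexOrder

/-- Scalar multiples of elements of a von Neumann algebra stay in it. -/
instance {H : Type} [NormedAddCommGroup H] [InnerProductSpace ℂ H] [CompleteSpace H] :
    SMulMemClass (VonNeumannAlgebra H) ℂ (H →L[ℂ] H) where
  smul_mem {M} c _x hx := M.toStarSubalgebra.smul_mem hx c

section VonNeumannDefs

variable {H : Type} [NormedAddCommGroup H] [InnerProductSpace ℂ H] [CompleteSpace H]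
variable {M : VonNeumannAlgebra H}

/-- The Loewner order on bounded operators: `x ≤ y` iff `y - x` is a positive operator. -/
def OpLE (x y : H →L[ℂ] H) : Prop := (y - x).IsPositive

/-- A linear functional on a von Neumann algebra is positive if `0 ≤ 𝔣 (x⋆ * x)` for
every `x`. -/
def VNIsPos (𝔣 : ↥M →ₗ[ℂ] ℂ) : Prop := ∀ x : ↥M, 0 ≤ 𝔣 (star x * x)

/-- Order on positive functionals: `𝔣 ≤ 𝔤` iff `𝔤 - 𝔣` is positive. -/
def VNLE (𝔣 𝔤 : ↥M →ₗ[ℂ] ℂ) : Prop := VNIsPos (𝔤 - 𝔣)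

/-- A functional `𝔣` on a von Neumann algebra `M` is normal if for every norm-bounded
increasing net `x : ι → M` of positive elements of `M` having a least upper bound `xsup`
in `M` (with respect to the Loewner order), `𝔣 xsup` is the supremum of the `𝔣 (x i)`. -/
def VNIsNormal (𝔣 : ↥M →ₗ[ℂ] ℂ) : Prop :=
  ∀ (ι : Type) [Preorder ι] [IsDirected ι (· ≤ ·)] [Nonempty ι]
    (x : ι → ↥M) (xsup : ↥M),
    (∀ i, (x i : H →L[ℂ] H).IsPositive) →
    (∀ i j, i ≤ j → OpLE (x i : H →L[ℂ] H) (x j : H →L[ℂ] H)) →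
    (∃ C : ℝ, ∀ i, ‖(x i : H →L[ℂ] H)‖ ≤ C) →
    (∀ i, OpLE (x i : H →L[ℂ] H) (xsup : H →L[ℂ] H)) →
    (∀ y : ↥M, (∀ i, OpLE (x i : H →L[ℂ] H) (y : H →L[ℂ] H)) →
      OpLE (xsup : H →L[ℂ] H) (y : H →L[ℂ] H)) →
    IsLUB (Set.range fun i => 𝔣 (x i)) (𝔣 xsup)

/-- Absolute continuity `𝔣 ≪ 𝔤` for normal positive functionals: `𝔣` is the pointwise
limit of an increasing sequence of normal positive functionals `𝔣ₙ` with `𝔣ₙ ≤ αₙ • 𝔤`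
for some positive reals `αₙ`. -/
def VNAbsCont (𝔣 𝔤 : ↥M →ₗ[ℂ] ℂ) : Prop :=
  ∃ (fn : ℕ → (↥M →ₗ[ℂ] ℂ)) (α : ℕ → ℝ),
    (∀ n, VNIsPos (fn n) ∧ VNIsNormal (fn n)) ∧
    (∀ n, 0 < α n) ∧
    (∀ n, VNLE (fn n) (fn (n + 1))) ∧
    (∀ n, VNLE (fn n) (((α n : ℂ)) • 𝔤)) ∧
    (∀ x : ↥M, Filter.Tendsto (fun n => fn n x) Filter.atTop (nhds (𝔣 x)))

/-- Singularity `𝔣 ⊥ 𝔤`: the only normal positive functional dominated by both `𝔣` and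
`𝔤` is `0`. -/
def VNSingular (𝔣 𝔤 : ↥M →ₗ[ℂ] ℂ) : Prop :=
  ∀ p : ↥M →ₗ[ℂ] ℂ, VNIsPos p → VNIsNormal p → VNLE p 𝔣 → VNLE p 𝔤 → p = 0

/-- `𝔣 = 𝔣r + 𝔣s` is a Lebesgue decomposition of `𝔣` with respect to `𝔤` within the
normal positive functionals. -/
def VNIsLebDecomp (𝔣 𝔤 𝔣r 𝔣s : ↥M →ₗ[ℂ] ℂ) : Prop :=
  VNIsPos 𝔣r ∧ VNIsNormal 𝔣r ∧ VNIsPos 𝔣s ∧ VNIsNormal 𝔣s ∧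
    𝔣 = 𝔣r + 𝔣s ∧ VNAbsCont 𝔣r 𝔤 ∧ VNSingular 𝔣s 𝔤

end VonNeumannDefs

section VonNeumannGlobal

variable {H : Type} [NormedAddCommGroup H] [InnerProductSpace ℂ H] [CompleteSpace H]

/-- The Lebesgue decomposition of normal positive functionals over the von Neumann
algebra `M` is unique. -/
def VNLebDecompUnique (M : VonNeumannAlgebra H) : Prop :=
  ∀ 𝔣 𝔤 : ↥M →ₗ[ℂ] ℂ, VNIsPos 𝔣 → VNIsNormal 𝔣 → VNIsPos 𝔤 → VNIsNormal 𝔤 →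
    ∀ 𝔣r 𝔣s 𝔣r' 𝔣s' : ↥M →ₗ[ℂ] ℂ,
      VNIsLebDecomp 𝔣 𝔤 𝔣r 𝔣s → VNIsLebDecomp 𝔣 𝔤 𝔣r' 𝔣s' → 𝔣r = 𝔣r' ∧ 𝔣s = 𝔣s'

/-- A von Neumann algebra is finite if `x⋆x = 1` implies `xx⋆ = 1`. -/
def VNFinite (M : VonNeumannAlgebra H) : Prop :=
  ∀ x : ↥M, star x * x = 1 → x * star x = 1

end VonNeumannGlobal

set_option linter.unusedSectionVars false
set_option linter.unusedSimpArgs false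

namespace KVN
open Filter Topology

section Basic
variable {H : Type} [NormedAddCommGroup H] [InnerProductSpace ℂ H] [CompleteSpace H]

lemma mul_ap (a b : H →L[ℂ] H) (ζ : H) : (a * b) ζ = a (b ζ) := rfl

lemma star_inner (a : H →L[ℂ] H) (ζ ξ : H) : inner ℂ (star a ζ) ξ = inner ℂ ζ (a ξ) := by
  rw [ContinuousLinearMap.star_eq_adjoint, ContinuousLinearMap.adjoint_inner_left]

lemma mem_iff {M : VonNeumannAlgebra H} {x : H →L[ℂ] H} :
    x ∈ M ↔ ∀ y ∈ M.commutant, y * x = x * y := by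
  conv_lhs => rw [← M.commutant_commutant]
  exact VonNeumannAlgebra.mem_commutant_iff

lemma comm_apply {M : VonNeumannAlgebra H} {x y : H →L[ℂ] H} (hx : x ∈ M)
    (hy : y ∈ M.commutant) (ζ : H) : y (x ζ) = x (y ζ) :=
  congrArg (fun T : H →L[ℂ] H => T ζ) (mem_iff.1 hx y hy)

lemma isClosed_vN (M : VonNeumannAlgebra H) : IsClosed (M : Set (H →L[ℂ] H)) := by
  rw [← M.centralizer_centralizer]
  exact Set.isClosed_centralizer _

lemma mem_of_tendsto {M : VonNeumannAlgebra H} {ι : Type*} {l : Filter ι} [l.NeBot]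
    {T : ι → H →L[ℂ] H} {V : H →L[ℂ] H} (hT : ∀ i, T i ∈ M)
    (h : ∀ ζ, Tendsto (fun i => T i ζ) l (𝓝 (V ζ))) : V ∈ M := by
  rw [mem_iff]
  intro y hy
  ext ζ
  have h1 : Tendsto (fun i => y (T i ζ)) l (𝓝 (y (V ζ))) := (y.continuous.tendsto _).comp (h ζ)
  have h2 : Tendsto (fun i => y (T i ζ)) l (𝓝 (V (y ζ))) := by
    simpa [comm_apply (hT _) hy] using h (y ζ)
  exact tendsto_nhds_unique h1 h2

lemma proj_mem {M : VonNeumannAlgebra H} (L : Submodule ℂ H) [L.HasOrthogonalProjection]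
    (h : ∀ y ∈ M.commutant, ∀ ζ ∈ L, y ζ ∈ L) : L.starProjection ∈ M := by
  rw [VonNeumannAlgebra.IsStarProjection.mem_iff isStarProjection_starProjection]
  intro y hy ζ hζ
  have : ζ ∈ L := by simpa using hζ
  simpa using h y hy ζ this

lemma cfc_mem' {M : VonNeumannAlgebra H} {a : H →L[ℂ] H} (ha : a ∈ M)
    (f : ℝ → ℝ) : cfc f a ∈ M := by
  rw [mem_iff]
  intro y hy
  by_cases hsa : IsSelfAdjoint a
  · have hc : Commute a y := (mem_iff.1 ha y hy).symm
    exact (hc.cfc_real f).symm.eq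
  · rw [cfc_apply_of_not_predicate _ hsa]; simp

lemma sqrt_mem {M : VonNeumannAlgebra H} {a : H →L[ℂ] H} (ha : a ∈ M) (h0 : 0 ≤ a) :
    CFC.sqrt a ∈ M := by
  rw [CFC.sqrt_eq_real_sqrt a h0, cfcₙ_eq_cfc]
  exact cfc_mem' ha _

lemma nonneg_iff {a : H →L[ℂ] H} :
    0 ≤ a ↔ ∀ ζ, 0 ≤ inner ℂ (a ζ) ζ := by
  rw [ContinuousLinearMap.nonneg_iff_isPositive]
  constructor
  · intro h ζ; exact h.inner_nonneg_left ζ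
  · intro h
    rw [ContinuousLinearMap.isPositive_iff_complex]
    intro ζ
    have := h ζ
    rw [Complex.nonneg_iff] at this
    refine ⟨?_, this.1⟩
    apply Complex.ext
    · simp
    · simpa using this.2

lemma le_iff {a b : H →L[ℂ] H} :
    a ≤ b ↔ ∀ ζ, inner ℂ (a ζ) ζ ≤ inner ℂ (b ζ) ζ := by
  rw [← sub_nonneg, nonneg_iff]
  simp [inner_sub_left]

lemma inner_sqrt {d : H →L[ℂ] H} (hd : 0 ≤ d) (ζ : H) :
    inner ℂ (d ζ) ζ = ((‖CFC.sqrt d ζ‖ ^ 2 : ℝ) : ℂ) := by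
  have h1 : CFC.sqrt d * CFC.sqrt d = d := CFC.sqrt_mul_sqrt_self d
  have h2 : IsSelfAdjoint (CFC.sqrt d) := (CFC.sqrt_nonneg d).isSelfAdjoint
  have h3 := (ContinuousLinearMap.isSelfAdjoint_iff_isSymmetric.1 h2)
  conv_lhs => rw [← h1]
  have : inner ℂ (CFC.sqrt d (CFC.sqrt d ζ)) ζ = inner ℂ (CFC.sqrt d ζ) (CFC.sqrt d ζ) := h3 _ _
  simp only [mul_ap, this]
  rw [inner_self_eq_norm_sq_to_K]; simp

lemma norm_sq_le {d : H →L[ℂ] H} (hd : 0 ≤ d) (ζ : H) :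
    ‖d ζ‖ ^ 2 ≤ ‖d‖ * (inner ℂ (d ζ) ζ : ℂ).re := by
  have h1 : CFC.sqrt d * CFC.sqrt d = d := CFC.sqrt_mul_sqrt_self d
  have h2 : IsSelfAdjoint (CFC.sqrt d) := (CFC.sqrt_nonneg d).isSelfAdjoint
  have h3 : ‖CFC.sqrt d‖ ^ 2 = ‖d‖ := by
    conv_rhs => rw [← h1]
    rw [h2.norm_mul_self]
  rw [inner_sqrt hd, Complex.ofReal_re, ← h3]
  have : d ζ = CFC.sqrt d (CFC.sqrt d ζ) := by
    conv_lhs => rw [← h1]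
    rfl
  rw [this, ← mul_pow]
  gcongr
  exact ContinuousLinearMap.le_opNorm _ _

lemma apply_eq_zero {d : H →L[ℂ] H} (hd : 0 ≤ d) {ζ : H} (h : inner ℂ (d ζ) ζ = 0) : d ζ = 0 := by
  have := norm_sq_le hd ζ
  rw [h] at this
  simp at this
  have h2 : ‖d ζ‖ ^ 2 = 0 := le_antisymm (by simpa using this) (by positivity)
  simpa using h2

lemma vig (a : ℕ → H →L[ℂ] H) (ha : ∀ n, 0 ≤ a n) (hanti : Antitone a) :
    ∃ b : H →L[ℂ] H, (∀ ζ, Tendsto (fun n => a n ζ) atTop (𝓝 (b ζ))) ∧ 0 ≤ b ∧ ∀ n, b ≤ a n := by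
  have key : ∀ ζ, ∃ v, Tendsto (fun n => a n ζ) atTop (𝓝 v) := by
    intro ζ
    apply cauchySeq_tendsto_of_complete
    set r : ℕ → ℝ := fun n => (inner ℂ (a n ζ) ζ : ℂ).re with hr
    have hrm : Antitone r := fun i j hij => (Complex.le_def.1 (le_iff.1 (hanti hij) ζ)).1
    have hr0 : ∀ n, 0 ≤ r n := fun n => (Complex.nonneg_iff.1 (nonneg_iff.1 (ha n) ζ)).1
    have hrt := tendsto_atTop_ciInf hrm ⟨0, by rintro _ ⟨n, rfl⟩; exact hr0 n⟩
    have hrc : CauchySeq r := hrt.cauchySeq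
    have bd : ∀ i j, i ≤ j → ‖a i ζ - a j ζ‖ ^ 2 ≤ ‖a 0‖ * (r i - r j) := by
      intro i j hij
      have h0 : 0 ≤ a i - a j := sub_nonneg.2 (hanti hij)
      have h1 := norm_sq_le h0 ζ
      have h2 : ‖a i - a j‖ ≤ ‖a 0‖ :=
        CStarAlgebra.norm_le_norm_of_nonneg_of_le h0
          ((sub_le_self _ (ha j)).trans (hanti (Nat.zero_le _)))
      have h3 : (inner ℂ ((a i - a j) ζ) ζ : ℂ).re = r i - r j := by
        simp [inner_sub_left, hr]
      rw [h3] at h1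
      have h4 : 0 ≤ r i - r j := sub_nonneg.2 (hrm hij)
      calc ‖a i ζ - a j ζ‖ ^ 2 ≤ ‖a i - a j‖ * (r i - r j) := h1
        _ ≤ _ := by gcongr
    rw [Metric.cauchySeq_iff'] at hrc ⊢
    intro ε hε
    obtain ⟨N, hN⟩ := hrc (ε ^ 2 / (‖a 0‖ + 1)) (by positivity)
    refine ⟨N, fun n hn => ?_⟩
    have h1 := bd N n hn
    have h2 := hN n hn
    rw [Real.dist_eq, abs_sub_comm, abs_of_nonneg (sub_nonneg.2 (hrm hn)),
      lt_div_iff₀ (by positivity)] at h2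
    rw [dist_eq_norm, norm_sub_rev]
    have h4 : 0 ≤ r N - r n := sub_nonneg.2 (hrm hn)
    have : ‖a N ζ - a n ζ‖ ^ 2 < ε ^ 2 := by nlinarith
    exact lt_of_pow_lt_pow_left₀ 2 hε.le this
  choose v hv using key
  let b : H →L[ℂ] H := continuousLinearMapOfTendsto a (f := v) (tendsto_pi_nhds.2 hv)
  have hb : ∀ ζ, Tendsto (fun n => a n ζ) atTop (𝓝 (b ζ)) := hv
  have hin : ∀ ζ, Tendsto (fun n => (inner ℂ (a n ζ) ζ : ℂ)) atTop (𝓝 (inner ℂ (b ζ) ζ)) :=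
    fun ζ => (hb ζ).inner tendsto_const_nhds
  refine ⟨b, hb, ?_, ?_⟩
  · rw [nonneg_iff]
    intro ζ
    exact ge_of_tendsto' (hin ζ) fun n => nonneg_iff.1 (ha n) ζ
  · intro n
    rw [le_iff]
    intro ζ
    refine le_of_tendsto (hin ζ) (eventually_atTop.2 ⟨n, fun m hm => le_iff.1 (hanti hm) ζ⟩)

/-- Limit of compatible contractions along increasing projections. -/
lemma lim_compat (M : VonNeumannAlgebra H) (T P : ℕ → H →L[ℂ] H) (hT : ∀ n, T n ∈ M)
    (hTn : ∀ n, ‖T n‖ ≤ 1) (hP : ∀ n, IsStarProjection (P n)) (hPM : ∀ n, P n ∈ M)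
    (hPm : Monotone P) (hc : ∀ n, T (n + 1) * P n = T n * P n) :
    ∃ V ∈ M, ∀ ζ, Tendsto (fun n => T n (P n ζ)) atTop (𝓝 (V ζ)) := by
  have hc' : ∀ n k, T (n + k) * P n = T n * P n := by
    intro n k
    induction k with
    | zero => rfl
    | succ k ih =>
      have h1 : P (n + k) * P n = P n :=
        ((hP n).le_iff_mul_eq_right (hP (n+k))).1 (hPm (Nat.le_add_right n k))
      calc T (n + (k + 1)) * P n = T (n + k + 1) * P (n + k) * P n := by rw [mul_assoc, h1]; rfl
        _ = T (n + k) * P n := by rw [hc, mul_assoc, h1]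
        _ = _ := ih
  obtain ⟨Q, hQ, -, -⟩ := vig (fun n => 1 - P n) (fun n => (hP n).one_sub.nonneg)
    (fun i j hij => sub_le_sub_left (hPm hij) 1)
  have key : ∀ ζ, ∃ v, Tendsto (fun n => T n (P n ζ)) atTop (𝓝 v) := by
    intro ζ
    apply cauchySeq_tendsto_of_complete
    have hcs : CauchySeq fun n => P n ζ := by
      have := ((tendsto_const_nhds (x := ζ)).sub (hQ ζ))
      simp at this
      exact this.cauchySeq
    rw [Metric.cauchySeq_iff'] at hcs ⊢
    intro ε hε
    obtain ⟨N, hN⟩ := hcs ε hε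
    refine ⟨N, fun n hn => lt_of_le_of_lt ?_ (hN n hn)⟩
    obtain ⟨k, rfl⟩ := Nat.exists_eq_add_of_le hn
    have h1 : T N (P N ζ) = T (N + k) (P N ζ) :=
      (congrArg (fun S : H →L[ℂ] H => S ζ) (hc' N k)).symm
    rw [h1, dist_eq_norm, dist_eq_norm, ← map_sub]
    exact (ContinuousLinearMap.le_of_opNorm_le _ (hTn _) _).trans (by simp)
  choose v hv using key
  let b : H →L[ℂ] H := continuousLinearMapOfTendsto (fun n => T n * P n) (f := v)
    (tendsto_pi_nhds.2 hv)
  have hb : ∀ ζ, Tendsto (fun n => (T n * P n) ζ) atTop (𝓝 (b ζ)) := hv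
  exact ⟨b, mem_of_tendsto (fun n => mul_mem (hT n) (hPM n)) hb, hb⟩

end Basic
end KVN

namespace KVN
open Filter Topology

section PD
variable {H : Type} [NormedAddCommGroup H] [InnerProductSpace ℂ H] [CompleteSpace H]

/-- Range projection. -/
noncomputable def rp (a : H →L[ℂ] H) : H →L[ℂ] H :=
  (LinearMap.range (a : H →ₗ[ℂ] H)).topologicalClosure.starProjection

lemma rp_proj (a : H →L[ℂ] H) : IsStarProjection (rp a) := isStarProjection_starProjection

lemma rp_zero {a T : H →L[ℂ] H} (h : T * a = 0) : T * rp a = 0 := by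
  ext ζ
  have h1 : rp a ζ ∈ (LinearMap.range (a : H →ₗ[ℂ] H)).topologicalClosure :=
    Submodule.starProjection_apply_mem _ _
  have h2 : (LinearMap.range (a : H →ₗ[ℂ] H)).topologicalClosure ≤
      LinearMap.ker (T : H →ₗ[ℂ] H) := by
    apply Submodule.topologicalClosure_minimal
    · rintro _ ⟨ξ, rfl⟩
      exact congrArg (fun S : H →L[ℂ] H => S ξ) h
    · exact T.isClosed_ker
  exact h2 h1

lemma rp_mul (a : H →L[ℂ] H) : rp a * a = a := by
  ext ζ
  apply Submodule.starProjection_eq_self_iff.2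
  exact Submodule.le_topologicalClosure _ ⟨ζ, rfl⟩

lemma rp_mem {M : VonNeumannAlgebra H} {a : H →L[ℂ] H} (ha : a ∈ M) : rp a ∈ M := by
  apply proj_mem
  intro y hy ζ hζ
  have h2 : (LinearMap.range (a : H →ₗ[ℂ] H)).topologicalClosure ≤
      ((LinearMap.range (a : H →ₗ[ℂ] H)).topologicalClosure).comap (y : H →ₗ[ℂ] H) := by
    apply Submodule.topologicalClosure_minimal
    · rintro _ ⟨ξ, rfl⟩
      refine Submodule.le_topologicalClosure _ ⟨y ξ, ?_⟩
      exact (comm_apply ha hy ξ).symm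
    · exact (Submodule.isClosed_topologicalClosure _).preimage y.continuous
  exact h2 hζ

/-- Partial isometries. -/
def PI (w : H →L[ℂ] H) : Prop := w * star w * w = w

lemma PI.star {w : H →L[ℂ] H} (h : PI w) : PI (star w) := by
  have := congrArg Star.star h
  simpa [PI, mul_assoc] using this

lemma PI.init {w : H →L[ℂ] H} (h : PI w) : IsStarProjection (Star.star w * w) := by
  refine ⟨?_, ?_⟩
  · unfold IsIdempotentElem
    have h' : w * Star.star w * w = w := h
    rw [mul_assoc, ← mul_assoc w, h']
  · exact IsSelfAdjoint.star_mul_self w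

lemma PI.of_init {w : H →L[ℂ] H} (h : IsStarProjection (Star.star w * w)) : PI w := by
  have h1 : (Star.star w * w) * (Star.star w * w) = Star.star w * w := h.1
  have : Star.star (w - w * Star.star w * w) * (w - w * Star.star w * w) = 0 := by
    have e : Star.star (w - w * Star.star w * w) * (w - w * Star.star w * w)
       = Star.star w * w - (Star.star w * w) * (Star.star w * w) - (Star.star w * w) * (Star.star w * w)
         + (Star.star w * w) * (Star.star w * w) * (Star.star w * w) := by
      simp only [star_sub, star_mul, star_star]; noncomm_ring
    rw [e, h1, h1]; simp
  have h2 := CStarRing.star_mul_self_eq_zero_iff _ |>.1 this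
  exact (sub_eq_zero.1 h2).symm

lemma PI.add {u v : H →L[ℂ] H} (hu : PI u) (hv : PI v) (h1 : Star.star u * v = 0)
    (h2 : u * Star.star v = 0) : PI (u + v) ∧
      Star.star (u + v) * (u + v) = Star.star u * u + Star.star v * v := by
  have h1' : Star.star v * u = 0 := by simpa using congrArg Star.star h1
  have h2' : v * Star.star u = 0 := by simpa using congrArg Star.star h2
  have e : Star.star (u + v) * (u + v) = Star.star u * u + Star.star v * v := by
    simp [add_mul, mul_add, h1, h1']
  refine ⟨?_, e⟩
  have hu' : u * (Star.star u * u) = u := by rw [← mul_assoc]; exact hu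
  have hv' : v * (Star.star v * v) = v := by rw [← mul_assoc]; exact hv
  unfold PI
  rw [mul_assoc, e, add_mul, mul_add, mul_add, hu', hv', ← mul_assoc, h2, ← mul_assoc v, h2']
  simp

lemma PI.norm_le {w : H →L[ℂ] H} (h : PI w) : ‖w‖ ≤ 1 := by
  have h1 : ‖Star.star w * w‖ ≤ 1 := by
    exact h.init.norm_le
  rw [CStarRing.norm_star_mul_self] at h1
  nlinarith [norm_nonneg w]

lemma polar {M : VonNeumannAlgebra H} {x : H →L[ℂ] H} (hx : x ∈ M) :
    ∃ v ∈ M, PI v ∧ v * CFC.sqrt (star x * x) = x ∧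
      (∀ T, T * x = 0 → T * v = 0) ∧ (∀ T, x * T = 0 → v * T = 0) := by
  set a := CFC.sqrt (star x * x) with ha
  have h0 : 0 ≤ star x * x := star_mul_self_nonneg x
  have haM : a ∈ M := sqrt_mem (mul_mem (star_mem hx) hx) h0
  have hasa : IsSelfAdjoint a := (CFC.sqrt_nonneg _).isSelfAdjoint
  have haa : a * a = star x * x := CFC.sqrt_mul_sqrt_self _
  have hn : ∀ ζ, ‖x ζ‖ = ‖a ζ‖ := by
    intro ζ
    have h1 := inner_sqrt h0 ζ
    have h2 : inner ℂ ((star x * x) ζ) ζ = ((‖x ζ‖ ^ 2 : ℝ) : ℂ) := by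
      have : inner ℂ ((star x * x) ζ) ζ = inner ℂ (x ζ) (x ζ) := by
        rw [mul_ap, star_inner]
      rw [this, inner_self_eq_norm_sq_to_K]; simp
    rw [h2] at h1
    have h3 : ‖x ζ‖ ^ 2 = ‖a ζ‖ ^ 2 := by exact_mod_cast h1
    exact (sq_eq_sq₀ (norm_nonneg _) (norm_nonneg _)).1 h3
  set L := (LinearMap.range (a : H →ₗ[ℂ] H)).topologicalClosure with hL
  let aL : H →ₗ[ℂ] L := (a : H →ₗ[ℂ] H).codRestrict L
    (fun ζ => Submodule.le_topologicalClosure _ ⟨ζ, rfl⟩)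
  have hd : DenseRange aL := by
    intro ⟨l, hl⟩
    rw [closure_subtype]
    have : (Set.image Subtype.val (Set.range aL)) = (LinearMap.range (a : H →ₗ[ℂ] H) : Set H) := by
      ext z; constructor
      · rintro ⟨_, ⟨ξ, rfl⟩, rfl⟩; exact ⟨ξ, rfl⟩
      · rintro ⟨ξ, rfl⟩; exact ⟨_, ⟨ξ, rfl⟩, rfl⟩
    rw [this]; exact hl
  have hb : ∃ C : ℝ, ∀ ζ, ‖(x : H →ₗ[ℂ] H) ζ‖ ≤ C * ‖aL ζ‖ := ⟨1, fun ζ => by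
    have := (hn ζ).le
    rw [one_mul]; exact this⟩
  let ext : L →L[ℂ] H := LinearMap.extendOfNorm (x : H →ₗ[ℂ] H) aL
  have hext : ∀ ζ, ext (aL ζ) = x ζ := fun ζ => LinearMap.extendOfNorm_eq hd hb ζ
  have hiso : ∀ l, ‖ext l‖ = ‖l‖ := by
    intro l
    refine hd.induction_on (p := fun l => ‖ext l‖ = ‖l‖) l ?_ ?_
    · exact isClosed_eq (by fun_prop) (by fun_prop)
    · intro ζ; rw [hext]; exact hn ζ
  let v : H →L[ℂ] H := ext ∘L L.orthogonalProjectionOnto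
  have hva : v * a = x := by
    ext ζ
    change ext (L.orthogonalProjectionOnto (a ζ)) = x ζ
    rw [← hext ζ]
    congr 1
    exact Submodule.orthogonalProjectionOnto_mem_subspace_eq_self (aL ζ)
  have hvn : ∀ ζ, ‖v ζ‖ = ‖rp a ζ‖ := fun ζ => hiso _
  have hvv : star v * v = rp a := by
    have : ∀ ζ, inner ℂ ((star v * v) ζ) ζ = inner ℂ (rp a ζ) ζ := by
      intro ζ
      have e1 : inner ℂ ((star v * v) ζ) ζ = inner ℂ (v ζ) (v ζ) := by
        rw [mul_ap, star_inner]
      have e2 : inner ℂ (rp a ζ) ζ = inner ℂ (rp a ζ) (rp a ζ) := by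
        have : rp a = star (rp a) * rp a := by
          rw [(rp_proj a).2.star_eq]; exact (rp_proj a).1.symm
        conv_lhs => rw [this]
        rw [mul_ap, star_inner]
      rw [e1, e2, inner_self_eq_norm_sq_to_K, inner_self_eq_norm_sq_to_K, hvn]
    apply ContinuousLinearMap.coe_injective
    exact (ext_inner_map _ _).1 this
  have hPI : PI v := PI.of_init (hvv ▸ rp_proj a)
  have hvP : v * rp a = v := by rw [← hvv, ← mul_assoc]; exact hPI
  refine ⟨v, ?_, hPI, hva, ?_, ?_⟩
  · rw [mem_iff]
    intro y hy
    have h1 : (y * v - v * y) * a = 0 := by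
      have : a * y = y * a := (mem_iff.1 haM y hy).symm
      have h2 := mem_iff.1 hx y hy
      rw [sub_mul, mul_assoc, hva, mul_assoc, ← this, ← mul_assoc, hva, h2, sub_self]
    have h2 := rp_zero h1
    have h3 := mem_iff.1 (rp_mem haM) y hy
    rw [sub_mul, mul_assoc, hvP, mul_assoc, h3, ← mul_assoc, hvP] at h2
    exact sub_eq_zero.1 h2
  · intro T hT
    have h1 : (T * v) * a = 0 := by rw [mul_assoc, hva, hT]
    have h2 := rp_zero h1
    rwa [mul_assoc, hvP] at h2
  · intro T hT
    have h1 : a * T = 0 := by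
      ext ζ
      have h4 := hn (T ζ)
      have h5 : x (T ζ) = 0 := congrArg (fun S : H →L[ℂ] H => S ζ) hT
      rw [h5, norm_zero] at h4
      exact norm_eq_zero.1 h4.symm
    have h2 : star T * a = 0 := by
      have := congrArg star h1
      simpa [hasa.star_eq] using this
    have h3 := congrArg star (rp_zero h2)
    simp [(rp_proj a).2.star_eq] at h3
    rw [← hvP, mul_assoc, h3, mul_zero]

end PD
end KVN

namespace KVN
open Filter Topology

section EV
variable {H : Type} [NormedAddCommGroup H] [InnerProductSpace ℂ H] [CompleteSpace H]
variable {M : VonNeumannAlgebra H}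

open Classical in
/-- Real part of a functional, evaluated on an operator (zero outside the algebra). -/
noncomputable def ev (f : ↥M →ₗ[ℂ] ℂ) (x : H →L[ℂ] H) : ℝ :=
  if h : x ∈ M then (f ⟨x, h⟩).re else 0

lemma ev_mk (f : ↥M →ₗ[ℂ] ℂ) {x : H →L[ℂ] H} (h : x ∈ M) : ev f x = (f ⟨x, h⟩).re := by
  simp [ev, h]

lemma ev_coe (f : ↥M →ₗ[ℂ] ℂ) (x : ↥M) : ev f (x : H →L[ℂ] H) = (f x).re := ev_mk f x.2

lemma ev_add (f : ↥M →ₗ[ℂ] ℂ) {x y : H →L[ℂ] H} (hx : x ∈ M) (hy : y ∈ M) :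
    ev f (x + y) = ev f x + ev f y := by
  rw [ev_mk f hx, ev_mk f hy, ev_mk f (add_mem hx hy), ← Complex.add_re, ← map_add]; rfl

lemma ev_sub (f : ↥M →ₗ[ℂ] ℂ) {x y : H →L[ℂ] H} (hx : x ∈ M) (hy : y ∈ M) :
    ev f (x - y) = ev f x - ev f y := by
  rw [ev_mk f hx, ev_mk f hy, ev_mk f (sub_mem hx hy), ← Complex.sub_re, ← map_sub]; rfl

lemma ev_smul (f : ↥M →ₗ[ℂ] ℂ) {x : H →L[ℂ] H} (c : ℝ) (hx : x ∈ M) :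
    ev f ((c : ℂ) • x) = c * ev f x := by
  have h : (c : ℂ) • x ∈ M := SMulMemClass.smul_mem (c : ℂ) hx
  rw [ev_mk f hx, ev_mk f h]
  have : (⟨(c : ℂ) • x, h⟩ : ↥M) = (c : ℂ) • ⟨x, hx⟩ := rfl
  rw [this, map_smul]; simp

lemma ev_zero (f : ↥M →ₗ[ℂ] ℂ) : ev f 0 = 0 := by
  rw [ev_mk f (zero_mem M)]
  have : (⟨0, zero_mem M⟩ : ↥M) = 0 := rfl
  rw [this, map_zero]; rfl

lemma f_nonneg {f : ↥M →ₗ[ℂ] ℂ} (hf : VNIsPos f) (x : ↥M) (h0 : 0 ≤ (x : H →L[ℂ] H)) :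
    0 ≤ f x := by
  have h1 := hf ⟨CFC.sqrt (x : H →L[ℂ] H), sqrt_mem x.2 h0⟩
  have h2 : (star (⟨CFC.sqrt (x : H →L[ℂ] H), sqrt_mem x.2 h0⟩ : ↥M) *
      ⟨CFC.sqrt (x : H →L[ℂ] H), sqrt_mem x.2 h0⟩ : ↥M) = x := by
    apply Subtype.ext
    change star (CFC.sqrt (x : H →L[ℂ] H)) * CFC.sqrt (x : H →L[ℂ] H) = x
    rw [(CFC.sqrt_nonneg (x : H →L[ℂ] H)).isSelfAdjoint.star_eq]
    exact CFC.sqrt_mul_sqrt_self _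
  rwa [h2] at h1

lemma ev_nonneg {f : ↥M →ₗ[ℂ] ℂ} (hf : VNIsPos f) {x : H →L[ℂ] H} (hx : x ∈ M) (h0 : 0 ≤ x) :
    0 ≤ ev f x := by
  rw [ev_mk f hx]
  exact (Complex.nonneg_iff.1 (f_nonneg hf ⟨x, hx⟩ h0)).1

lemma ev_mono {f : ↥M →ₗ[ℂ] ℂ} (hf : VNIsPos f) {x y : H →L[ℂ] H} (hx : x ∈ M) (hy : y ∈ M)
    (h : x ≤ y) : ev f x ≤ ev f y := by
  have := ev_nonneg hf (sub_mem hy hx) (sub_nonneg.2 h)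
  rw [ev_sub f hy hx] at this
  linarith

/-- Faithfulness. -/
def Faithful (g : ↥M →ₗ[ℂ] ℂ) : Prop := ∀ x : ↥M, g (star x * x) = 0 → x = 0

lemma ev_faithful {g : ↥M →ₗ[ℂ] ℂ} (hg : VNIsPos g) (hf : Faithful g) {x : H →L[ℂ] H}
    (hx : x ∈ M) (h : ev g (star x * x) ≤ 0) : x = 0 := by
  have h1 := hg ⟨x, hx⟩
  rw [ev_mk g (mul_mem (star_mem hx) hx)] at h
  have h2 : g (star ⟨x, hx⟩ * ⟨x, hx⟩) = 0 := by
    rw [Complex.nonneg_iff] at h1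
    apply Complex.ext
    · exact le_antisymm h h1.1
    · exact h1.2.symm
  exact congrArg Subtype.val (hf _ h2)

lemma fin_op (h : VNFinite M) {x : H →L[ℂ] H} (hx : x ∈ M) (h1 : star x * x = 1) :
    x * star x = 1 :=
  congrArg Subtype.val (h ⟨x, hx⟩ (Subtype.ext h1))

lemma proj_lim (P : ℕ → H →L[ℂ] H) (hP : ∀ n, IsStarProjection (P n)) (hm : Monotone P) :
    ∃ Q, IsStarProjection Q ∧ (∀ ζ, Tendsto (fun n => P n ζ) atTop (𝓝 (Q ζ))) ∧ ∀ n, P n ≤ Q := by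
  obtain ⟨R, hR, hR0, hRle⟩ := vig (fun n => 1 - P n) (fun n => (hP n).one_sub.nonneg)
    (fun i j hij => sub_le_sub_left (hm hij) 1)
  have hQ : ∀ ζ, Tendsto (fun n => P n ζ) atTop (𝓝 ((1 - R) ζ)) := by
    intro ζ
    have := ((tendsto_const_nhds (x := ζ)).sub (hR ζ))
    simpa using this
  have h1 : ∀ n, (1 - R) * P n = P n := by
    intro n
    ext ζ
    refine tendsto_nhds_unique (hQ (P n ζ)) ?_
    refine tendsto_const_nhds.congr' ?_
    filter_upwards [eventually_ge_atTop n] with k hk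
    have : P k * P n = P n := ((hP n).le_iff_mul_eq_right (hP k)).1 (hm hk)
    exact (congrArg (fun S : H →L[ℂ] H => S ζ) this).symm
  refine ⟨1 - R, ⟨?_, ?_⟩, hQ, fun n => by have := hRle n; exact le_sub_comm.1 this⟩
  · ext ζ
    have h2 := ((1 - R).continuous.tendsto _).comp (hQ ζ)
    refine tendsto_nhds_unique h2 ((hQ ζ).congr fun n => ?_)
    exact (congrArg (fun S : H →L[ℂ] H => S ζ) (h1 n)).symm
  · exact (IsSelfAdjoint.one _).sub hR0.isSelfAdjoint

lemma ext_inner {a b : H →L[ℂ] H} (h : ∀ ζ, inner ℂ (a ζ) ζ = inner ℂ (b ζ) ζ) : a = b := by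
  apply ContinuousLinearMap.coe_injective
  exact (ext_inner_map _ _).1 h

lemma inner_star_mul (a : H →L[ℂ] H) (ζ : H) :
    inner ℂ ((star a * a) ζ) ζ = ((‖a ζ‖ ^ 2 : ℝ) : ℂ) := by
  rw [mul_ap, star_inner, inner_self_eq_norm_sq_to_K]; simp

lemma proj_inner {P : H →L[ℂ] H} (hP : IsStarProjection P) (ζ : H) :
    inner ℂ (P ζ) ζ = ((‖P ζ‖ ^ 2 : ℝ) : ℂ) := by
  have : star P * P = P := by rw [hP.2.star_eq]; exact hP.1
  rw [← inner_star_mul, this]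

/-- Greedy choice in the corner complementary to a partial isometry. -/
lemma greedy {g : ↥M →ₗ[ℂ] ℂ} (hg : VNIsPos g) (u : H →L[ℂ] H) :
    ∃ v ∈ M, PI v ∧ star u * v = 0 ∧ u * star v = 0 ∧
      ∀ v' ∈ M, PI v' → star u * v' = 0 → u * star v' = 0 →
        ev g (star v' * v') ≤ 2 * ev g (star v * v) := by
  let S : Set ℝ := {r | ∃ v ∈ M, PI v ∧ star u * v = 0 ∧ u * star v = 0 ∧ r = ev g (star v * v)}
  have hz : (0 : ℝ) ∈ S := ⟨0, zero_mem M, by simp [PI], by simp, by simp, by simp [ev_zero]⟩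
  have hb : BddAbove S := by
    refine ⟨ev g 1, ?_⟩
    rintro _ ⟨v, hv, hpv, -, -, rfl⟩
    exact ev_mono hg (mul_mem (star_mem hv) hv) (one_mem M) hpv.init.le_one
  have h0 : 0 ≤ sSup S := le_csSup hb hz
  rcases h0.eq_or_lt with h | h
  · refine ⟨0, zero_mem M, by simp [PI], by simp, by simp, ?_⟩
    intro v' hv' h1 h2 h3
    have : ev g (star v' * v') ≤ sSup S := le_csSup hb ⟨v', hv', h1, h2, h3, rfl⟩
    simp [ev_zero]; linarith
  · obtain ⟨_, ⟨v, hv, h1, h2, h3, rfl⟩, hlt⟩ := exists_lt_of_lt_csSup ⟨0, hz⟩ (half_lt_self h)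
    refine ⟨v, hv, h1, h2, h3, ?_⟩
    intro v' hv' h1 h2 h3
    have : ev g (star v' * v') ≤ sSup S := le_csSup hb ⟨v', hv', h1, h2, h3, rfl⟩
    linarith

/-- Maximal extension of a partial isometry. -/
lemma max_ext {g : ↥M →ₗ[ℂ] ℂ} (hg : VNIsPos g) (hgf : Faithful g) {w : H →L[ℂ] H}
    (hw : w ∈ M) (hpw : PI w) :
    ∃ V ∈ M, PI V ∧ V * (star w * w) = w ∧
      ∀ x ∈ M, star V * x = 0 → x * star V = 0 → x = 0 := by
  choose nx hnM hnP hn1 hn2 hn3 using fun u : H →L[ℂ] H => greedy hg u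
  let u : ℕ → H →L[ℂ] H := fun n => Nat.rec w (fun _ u => u + nx u) n
  have hus : ∀ n, u (n + 1) = u n + nx (u n) := fun n => rfl
  have huM : ∀ n, u n ∈ M := by
    intro n
    induction n with
    | zero => exact hw
    | succ n ih => rw [hus]; exact add_mem ih (hnM _)
  have huP : ∀ n, PI (u n) := by
    intro n
    induction n with
    | zero => exact hpw
    | succ n ih => rw [hus]; exact (ih.add (hnP _) (hn1 _) (hn2 _)).1
  have hPs : ∀ n, star (u (n + 1)) * u (n + 1) = star (u n) * u n + star (nx (u n)) * nx (u n) := by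
    intro n; rw [hus]; exact ((huP n).add (hnP _) (hn1 _) (hn2 _)).2
  set P : ℕ → H →L[ℂ] H := fun n => star (u n) * u n with hP
  have hPp : ∀ n, IsStarProjection (P n) := fun n => (huP n).init
  have hPM : ∀ n, P n ∈ M := fun n => mul_mem (star_mem (huM n)) (huM n)
  have hmono : Monotone P := by
    apply monotone_nat_of_le_succ
    intro n
    rw [show P (n + 1) = _ from hPs n]
    exact le_add_of_nonneg_right (star_mul_self_nonneg _)
  have huPn : ∀ n, u n * P n = u n := fun n => by rw [hP, ← mul_assoc]; exact huP n
  have hcomp : ∀ n, u (n + 1) * P n = u n * P n := by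
    intro n
    have : nx (u n) * star (u n) = 0 := by simpa using congrArg star (hn2 (u n))
    rw [hus, add_mul, hP, ← mul_assoc (nx (u n)), this]; simp
  obtain ⟨V, hVM, hV⟩ := lim_compat M u P huM (fun n => (huP n).norm_le) hPp hPM hmono hcomp
  obtain ⟨Q, hQp, hQ, hPQ⟩ := proj_lim P hPp hmono
  have hcomp' : ∀ n k, u (n + k) * P n = u n := by
    intro n k
    induction k with
    | zero => exact huPn n
    | succ k ih =>
      have h1 : P (n + k) * P n = P n :=
        ((hPp n).le_iff_mul_eq_right (hPp (n+k))).1 (hmono (Nat.le_add_right n k))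
      calc u (n + (k + 1)) * P n = u (n + k + 1) * P (n + k) * P n := by rw [mul_assoc, h1]; rfl
        _ = u (n + k) * P n := by rw [hcomp, mul_assoc, h1]
        _ = _ := ih
  have hVP : ∀ n, V * P n = u n := by
    intro n
    ext ζ
    refine tendsto_nhds_unique (hV (P n ζ)) (tendsto_const_nhds.congr' ?_)
    filter_upwards [eventually_ge_atTop n] with k hk
    obtain ⟨j, rfl⟩ := Nat.exists_eq_add_of_le hk
    have h1 : P (n + j) * P n = P n := ((hPp n).le_iff_mul_eq_right (hPp _)).1 (hmono hk)
    have h2 : u (n + j) * (P (n + j) * P n) = u n := by rw [h1, hcomp']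
    exact (congrArg (fun S : H →L[ℂ] H => S ζ) h2).symm
  have hVQ : star V * V = Q := by
    apply ext_inner
    intro ζ
    rw [inner_star_mul, proj_inner hQp]
    have h1 : Tendsto (fun n => ‖u n (P n ζ)‖) atTop (𝓝 ‖V ζ‖) := (hV ζ).norm
    have h2 : Tendsto (fun n => ‖P n ζ‖) atTop (𝓝 ‖Q ζ‖) := (hQ ζ).norm
    have h3 : ∀ n, ‖u n (P n ζ)‖ = ‖P n ζ‖ := by
      intro n
      have h4 : inner ℂ (P n ζ) ζ = ((‖u n ζ‖ ^ 2 : ℝ) : ℂ) := inner_star_mul _ _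
      rw [proj_inner (hPp n)] at h4
      have h5 : ‖P n ζ‖ ^ 2 = ‖u n ζ‖ ^ 2 := by exact_mod_cast h4
      have h6 : u n (P n ζ) = u n ζ := congrArg (fun S : H →L[ℂ] H => S ζ) (huPn n)
      rw [h6]
      exact ((sq_eq_sq₀ (norm_nonneg _) (norm_nonneg _)).1 h5).symm
    simp only [h3] at h1
    rw [tendsto_nhds_unique h1 h2]
  have hVPI : PI V := PI.of_init (hVQ ▸ hQp)
  have small : ∀ v ∈ M, PI v → star V * v = 0 → V * star v = 0 → v = 0 := by
    intro v hv hpv h1 h2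
    have hle : ∀ n, ev g (star v * v) ≤ 2 * (ev g (P (n + 1)) - ev g (P n)) := by
      intro n
      have e1 : star (u n) * v = 0 := by
        rw [← hVP n, star_mul, mul_assoc, h1, mul_zero]
      have e2 : u n * star v = 0 := by
        have : P n * Q = P n := ((hPp n).le_iff_mul_eq_left hQp).1 (hPQ n)
        rw [← huPn n, ← this, ← hVQ, mul_assoc, mul_assoc, mul_assoc, mul_assoc (star V), h2]; simp
      have e3 := hn3 (u n) v hv hpv e1 e2
      have e4 : ev g (P (n + 1)) = ev g (P n) + ev g (star (nx (u n)) * nx (u n)) := by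
        rw [show P (n + 1) = _ from hPs n]
        exact ev_add g (hPM n) (mul_mem (star_mem (hnM _)) (hnM _))
      rw [e4]; linarith
    have hsum : ∀ n : ℕ, n * ev g (star v * v) ≤ 2 * (ev g (P n) - ev g (P 0)) := by
      intro n
      induction n with
      | zero => simp
      | succ n ih => have := hle n; push_cast; linarith
    have hbd : ∀ n : ℕ, n * ev g (star v * v) ≤ 2 * ev g 1 := by
      intro n
      have h3 := ev_nonneg hg (hPM 0) (hPp 0).nonneg
      have h4 := ev_mono hg (hPM n) (one_mem M) (hPp n).le_one
      have := hsum n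
      linarith
    apply ev_faithful hg hgf hv
    by_contra hpos
    push Not at hpos
    obtain ⟨n, hn⟩ := exists_nat_gt (2 * ev g 1 / ev g (star v * v))
    rw [div_lt_iff₀ hpos] at hn
    linarith [hbd n]
  refine ⟨V, hVM, hVPI, hVP 0, ?_⟩
  intro x hx h1 h2
  obtain ⟨v, hv, hpv, hvx, hA, hB⟩ := polar hx
  have hv0 : v = 0 := by
    apply small v hv hpv (hA _ h1)
    have := hB _ h2
    simpa using congrArg star this
  rw [← hvx, hv0, zero_mul]

end EV
end KVN

namespace KVN
open Filter Topology

section Ext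
variable {H : Type} [NormedAddCommGroup H] [InnerProductSpace ℂ H] [CompleteSpace H]
variable {M : VonNeumannAlgebra H}

lemma central_cover {p q : H →L[ℂ] H} (hp : p ∈ M) 
    (h : ∀ T ∈ M, q * T * p = 0) :
    ∃ z ∈ M, IsStarProjection z ∧ (∀ T ∈ M, T * z = z * T) ∧ q * z = 0 ∧ z * p = p := by
  let S : Submodule ℂ H := Submodule.span ℂ {ξ | ∃ T ∈ M, ∃ ζ, ξ = T (p ζ)}
  let L : Submodule ℂ H := S.topologicalClosure
  have inv : ∀ y : H →L[ℂ] H, (∀ T ∈ M, ∀ ζ, y (T (p ζ)) ∈ S) → ∀ ζ ∈ L, y ζ ∈ L := by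
    intro y hy ζ hζ
    have h2 : L ≤ L.comap (y : H →ₗ[ℂ] H) := by
      apply Submodule.topologicalClosure_minimal
      · apply Submodule.span_le.2
        rintro _ ⟨T, hT, ξ, rfl⟩
        exact Submodule.le_topologicalClosure _ (hy T hT ξ)
      · exact (Submodule.isClosed_topologicalClosure _).preimage y.continuous
    exact h2 hζ
  have h1 : L.starProjection ∈ M := by
    apply proj_mem
    intro y hy
    apply inv
    intro T hT ζ
    rw [comm_apply hT hy, comm_apply hp hy]
    exact Submodule.subset_span ⟨T, hT, _, rfl⟩
  have h2 : L.starProjection ∈ M.commutant := by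
    apply proj_mem
    intro y hy
    rw [M.commutant_commutant] at hy
    apply inv
    intro T hT ζ
    exact Submodule.subset_span ⟨y * T, mul_mem hy hT, ζ, rfl⟩
  refine ⟨L.starProjection, h1, isStarProjection_starProjection, ?_, ?_, ?_⟩
  · intro T hT
    exact VonNeumannAlgebra.mem_commutant_iff.1 h2 T hT
  · ext ζ
    have h3 : L.starProjection ζ ∈ L := Submodule.starProjection_apply_mem _ _
    have h4 : L ≤ LinearMap.ker (q : H →ₗ[ℂ] H) := by
      apply Submodule.topologicalClosure_minimal
      · apply Submodule.span_le.2
        rintro _ ⟨T, hT, ξ, rfl⟩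
        exact congrArg (fun S : H →L[ℂ] H => S ξ) (h T hT)
      · exact q.isClosed_ker
    exact h4 h3
  · ext ζ
    apply Submodule.starProjection_eq_self_iff.2
    exact Submodule.le_topologicalClosure _ (Submodule.subset_span ⟨1, one_mem M, ζ, rfl⟩)

/-- In a finite algebra a partial isometry extends to a unitary. -/
lemma unitary_ext (hfin : VNFinite M) {g : ↥M →ₗ[ℂ] ℂ} (hg : VNIsPos g) (hgf : Faithful g)
    {w : H →L[ℂ] H} (hw : w ∈ M) (hpw : PI w) :
    ∃ U ∈ M, star U * U = 1 ∧ U * star U = 1 ∧ U * (star w * w) = w := by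
  obtain ⟨V, hV, hPV, hVw, hmax⟩ := max_ext hg hgf hw hpw
  have hV1 : V * star V * V = V := hPV
  have hV2 : star V * V * star V = star V := by simpa [mul_assoc] using congrArg star hV1
  set p := 1 - star V * V with hp
  set q := 1 - V * star V with hq
  have hpM : p ∈ M := sub_mem (one_mem M) (mul_mem (star_mem hV) hV)
  have hqM : q ∈ M := sub_mem (one_mem M) (mul_mem hV (star_mem hV))
  have hqp : ∀ T ∈ M, q * T * p = 0 := by
    intro T hT
    apply hmax _ (mul_mem (mul_mem hqM hT) hpM)
    · have : star V * q = 0 := by rw [hq, mul_sub, mul_one, ← mul_assoc, hV2, sub_self]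
      rw [← mul_assoc, ← mul_assoc, this]; simp
    · have : p * star V = 0 := by rw [hp, sub_mul, one_mul, hV2, sub_self]
      rw [mul_assoc, this]; simp
  obtain ⟨z, hz, hzp, hzc, hqz, hzpp⟩ := central_cover hpM hqp
  have hzs : star z = z := hzp.2.star_eq
  have hzz : z * z = z := hzp.1
  have hzV : V * z = z * V := hzc V hV
  have hzV' : star V * z = z * star V := hzc _ (star_mem hV)
  set a := V * z + (1 - z) with ha
  have haM : a ∈ M := add_mem (mul_mem hV hz) (sub_mem (one_mem M) hz)
  have hsa : star a = z * star V + (1 - z) := by simp [ha, hzs]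
  have hz1 : z * (1 - z) = 0 := by rw [mul_sub, mul_one, hzz, sub_self]
  have hz2 : (1 - z) * z = 0 := by rw [sub_mul, one_mul, hzz, sub_self]
  have hz3 : (1 - z) * (1 - z) = 1 - z := hzp.one_sub.1
  have hVVz : V * star V * z = z := by
    rw [hq, sub_mul, one_mul] at hqz
    exact (sub_eq_zero.1 hqz).symm
  have haa : a * star a = 1 := by
    have e1 : V * z * (z * star V) = z := by
      rw [mul_assoc, ← mul_assoc z, hzz, ← hzV', ← mul_assoc, hVVz]
    have e2 : V * z * (1 - z) = 0 := by rw [mul_assoc, hz1, mul_zero]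
    have e3 : (1 - z) * (z * star V) = 0 := by rw [← mul_assoc, hz2, zero_mul]
    rw [hsa, ha, add_mul, mul_add, mul_add, e1, e2, e3, hz3]; simp
  have haa' : star a * a = 1 := by
    have := fin_op hfin (star_mem haM) (by rw [star_star]; exact haa)
    rwa [star_star] at this
  have hVz : z * (star V * V) = z := by
    have e1 := congrArg (fun x => z * x * z) haa'
    have e2 : z * star a = z * star V := by
      rw [hsa, mul_add, hz1, ← mul_assoc, hzz, add_zero]
    have e3 : a * z = V * z := by
      rw [ha, add_mul, hz2, mul_assoc, hzz, add_zero]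
    have e4 : z * (star a * a) * z = z * (star V * V) := by
      rw [← mul_assoc, e2, mul_assoc, e3, mul_assoc, ← mul_assoc (star V),
        hzc _ (mul_mem (star_mem hV) hV), ← mul_assoc, hzz]
    simp only [e4, mul_one, hzz] at e1
    exact e1
  have hp0 : p = 0 := by
    rw [← hzpp, hp, mul_sub, mul_one, hVz, sub_self]
  have hVV : star V * V = 1 := (sub_eq_zero.1 hp0).symm
  exact ⟨V, hV, hVV, fin_op hfin hV hVV, hVw⟩

lemma isometry_of_norm {V : H →L[ℂ] H} (h : ∀ ζ, ‖V ζ‖ = ‖ζ‖) : star V * V = 1 := by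
  apply ext_inner
  intro ζ
  rw [inner_star_mul, h]
  change _ = inner ℂ ζ ζ
  rw [inner_self_eq_norm_sq_to_K]; simp

lemma norm_of_isometry {V : H →L[ℂ] H} (h : star V * V = 1) (ζ : H) : ‖V ζ‖ = ‖ζ‖ := by
  have h1 := inner_star_mul V ζ
  rw [h] at h1
  change inner ℂ ζ ζ = _ at h1
  rw [inner_self_eq_norm_sq_to_K] at h1
  have h2 : ‖ζ‖ ^ 2 = ‖V ζ‖ ^ 2 := by
    have := congrArg Complex.re h1
    simpa [← Complex.ofReal_pow] using this
  exact ((sq_eq_sq₀ (norm_nonneg _) (norm_nonneg _)).1 h2).symm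

/-- Key vanishing lemma in finite algebras. -/
lemma vanish (hfin : VNFinite M) {g : ↥M →ₗ[ℂ] ℂ} (hg : VNIsPos g) (hgf : Faithful g)
    {Y : H →L[ℂ] H} (hY : Y ∈ M) (E : ℕ → H →L[ℂ] H) (hE : ∀ n, IsStarProjection (E n))
    (hEM : ∀ n, E n ∈ M) (hanti : Antitone E)
    (hlim : ∀ ζ, Tendsto (fun n => E n ζ) atTop (𝓝 0))
    {F : H →L[ℂ] H} (hFM : F ∈ M) (hF : IsStarProjection F)
    (h : ∀ m T, T * (Y * E m) = 0 → T * F = 0) : F = 0 := by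
  have hFs : star F = F := hF.2.star_eq
  have hFF : F * F = F := hF.1
  set P : ℕ → H →L[ℂ] H := fun n => 1 - E n with hP
  have hPp : ∀ n, IsStarProjection (P n) := fun n => (hE n).one_sub
  have hPM : ∀ n, P n ∈ M := fun n => sub_mem (one_mem M) (hEM n)
  have hPm : Monotone P := fun i j hij => sub_le_sub_left (hanti hij) 1
  have hPs : ∀ n, star (P n) = P n := fun n => (hPp n).2.star_eq
  have hPP : ∀ n, P n * P n = P n := fun n => (hPp n).1
  have hEP : ∀ n, E n * P n = 0 := fun n => by
    have : E n * E n = E n := (hE n).1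
    simp [hP, mul_sub, this]
  have step1 : ∀ m, ∃ U ∈ M, star U * U = 1 ∧ U * star U = 1 ∧ F * U * P m = 0 := by
    intro m
    set y := Y * E m with hy
    have hyM : y ∈ M := mul_mem hY (hEM m)
    obtain ⟨v, hv, hpv, hvx, hA, hB⟩ := polar hyM
    obtain ⟨U, hU, h1, h2, h3⟩ := unitary_ext hfin hg hgf hv hpv
    refine ⟨U, hU, h1, h2, ?_⟩
    set a := CFC.sqrt (star y * y) with ha
    have hasa : star a = a := (CFC.sqrt_nonneg _).isSelfAdjoint.star_eq
    have haa : a * a = star y * y := CFC.sqrt_mul_sqrt_self _ (star_mul_self_nonneg y)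
    have hav : star v * v * a = a := by
      have e0 : star v * v * (star v * v) = star v * v := hpv.init.1
      have e1 : star (a - star v * v * a) * (a - star v * v * a)
          = a * a - a * (star v * v) * a - a * (star v * v) * a
            + a * (star v * v * (star v * v)) * a := by
        simp only [star_sub, star_mul, star_star, hasa]; noncomm_ring
      have e2 : a * (star v * v) * a = a * a := by
        have : a * star v = star y := by rw [← hvx, star_mul, hasa]
        rw [← mul_assoc, this, mul_assoc, hvx, haa]
      rw [e0, e2] at e1
      have e3 : star (a - star v * v * a) * (a - star v * v * a) = 0 := by rw [e1]; abel
      exact (sub_eq_zero.1 ((CStarRing.star_mul_self_eq_zero_iff _).1 e3)).symm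
    have hUa : U * a = y := by
      rw [← hav, ← mul_assoc, h3, hvx]
    have hyP : y * P m = 0 := by rw [hy, mul_assoc, hEP, mul_zero]
    have hPa : P m * a = 0 := by
      have e1 : star (a * P m) * (a * P m) = 0 := by
        rw [star_mul, hasa, hPs, mul_assoc, ← mul_assoc a, haa, mul_assoc, hyP]; simp
      have := congrArg star ((CStarRing.star_mul_self_eq_zero_iff _).1 e1)
      simpa [hasa, hPs] using this
    have e5 : (P m * star U) * (Y * E m) = 0 := by
      rw [← hy, ← hUa, mul_assoc, ← mul_assoc (star U), h1, one_mul, hPa]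
    have e6 := congrArg star (h m _ e5)
    simpa [hFs, hPs, mul_assoc] using e6
  choose U hUM hU1 hU2 hU3 using step1
  let good : ℕ → (H →L[ℂ] H) → Prop := fun n T =>
    T ∈ M ∧ star T * T = 1 ∧ T * star T = 1 ∧ F * T * P n = 0
  have step2 : ∀ n (T : {T // good n T}), ∃ T' : {T // good (n + 1) T},
      (T' : H →L[ℂ] H) * P n = (T : H →L[ℂ] H) * P n := by
    rintro n ⟨T, hTM, hT1, hT2, hT3⟩
    have hPn : P (n + 1) * P n = P n :=
      ((hPp n).le_iff_mul_eq_right (hPp _)).1 (hPm (Nat.le_succ n))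
    set u := U (n + 1) with hu
    have hFu : F * u * P n = 0 := by rw [← hPn, ← mul_assoc, hU3, zero_mul]
    have hFu' : P n * star u * F = 0 := by simpa [hFs, hPs, mul_assoc] using congrArg star hFu
    set t := T * P n * star u with ht
    have hts : star t = u * P n * star T := by simp [ht, hPs, mul_assoc]
    have htM : t ∈ M := mul_mem (mul_mem hTM (hPM n)) (star_mem (hUM _))
    have htt : star t * t = u * P n * star u := by
      rw [hts, ht]
      calc u * P n * star T * (T * P n * star u) = u * P n * (star T * T) * P n * star u := by
            noncomm_ring
        _ = u * (P n * P n) * star u := by rw [hT1]; noncomm_ring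
        _ = _ := by rw [hPP]
    have htP : PI t := by
      unfold PI
      rw [mul_assoc, htt, ht]
      calc T * P n * star u * (u * P n * star u) = T * P n * (star u * u) * P n * star u := by
            noncomm_ring
        _ = T * (P n * P n) * star u := by rw [hU1]; noncomm_ring
        _ = _ := by rw [hPP]
    have hFP : PI F := by unfold PI; rw [hFs, hFF, hFF]
    have hFt : F * t = 0 := by rw [ht, ← mul_assoc, ← mul_assoc, hT3, zero_mul]
    obtain ⟨hw, hww⟩ := hFP.add htP (by rw [hFs, hFt]) (by
      rw [hts, ← mul_assoc, ← mul_assoc, hFu, zero_mul])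
    obtain ⟨W, hWM, hW1, hW2, hW3⟩ := unitary_ext hfin hg hgf (add_mem hFM htM) hw
    rw [hww, htt, hFs, hFF] at hW3
    have hWF : W * F = F := by
      have := congrArg (fun x => x * F) hW3
      have e1 : W * (F + u * P n * star u) * F = W * F := by
        rw [mul_assoc, add_mul, hFF, mul_assoc u, mul_assoc u, hFu']; simp
      have e2 : (F + t) * F = F := by
        rw [add_mul, hFF, ht, mul_assoc T, mul_assoc T, hFu']; simp
      simpa only [e1, e2] using this
    have hWu : W * u * P n = T * P n := by
      have := congrArg (fun x => x * (u * P n)) hW3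
      have e1 : W * (F + u * P n * star u) * (u * P n) = W * u * P n := by
        calc _ = W * (F * u * P n) + W * u * P n * (star u * u) * P n := by noncomm_ring
          _ = W * u * (P n * P n) := by rw [hFu, hU1]; noncomm_ring
          _ = _ := by rw [hPP]
      have e2 : (F + t) * (u * P n) = T * P n := by
        calc _ = F * u * P n + T * P n * (star u * u) * P n := by rw [ht]; noncomm_ring
          _ = T * (P n * P n) := by rw [hFu, hU1]; noncomm_ring
          _ = _ := by rw [hPP]
      simpa only [e1, e2] using this
    have hFW : F * W = F := by
      have e1 : star W * F = F := by
        conv_lhs => rw [← hWF]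
        rw [← mul_assoc, hW1, one_mul]
      simpa [hFs] using congrArg star e1
    refine ⟨⟨W * u, mul_mem hWM (hUM _), ?_, ?_, ?_⟩, hWu⟩
    · rw [star_mul, mul_assoc, ← mul_assoc (star W), hW1, one_mul, hU1]
    · rw [star_mul, mul_assoc, ← mul_assoc u, hU2, one_mul, hW2]
    · rw [← mul_assoc, hFW, hU3]
  choose nx hnx using step2
  let s : ∀ n, {T // good n T} := fun n =>
    Nat.rec (motive := fun n => {T // good n T}) ⟨U 0, hUM 0, hU1 0, hU2 0, hU3 0⟩ (fun n T => nx n T) n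
  have hs : ∀ n, (s (n + 1)).1 * P n = (s n).1 * P n := fun n => hnx n (s n)
  obtain ⟨V, hVM, hV⟩ := lim_compat M (fun n => (s n).1) P (fun n => (s n).2.1)
    (fun n => ContinuousLinearMap.opNorm_le_bound _ zero_le_one
      (fun ζ => by rw [norm_of_isometry (s n).2.2.1, one_mul])) hPp hPM hPm hs
  have hPl : ∀ ζ, Tendsto (fun n => P n ζ) atTop (𝓝 ζ) := by
    intro ζ
    have := (tendsto_const_nhds (x := ζ)).sub (hlim ζ)
    simpa [hP] using this
  have hVV : star V * V = 1 := by
    apply isometry_of_norm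
    intro ζ
    refine tendsto_nhds_unique (hV ζ).norm ?_
    refine (hPl ζ).norm.congr fun n => ?_
    rw [norm_of_isometry (s n).2.2.1]
  have hFV : F * V = 0 := by
    ext ζ
    have h1 := (F.continuous.tendsto _).comp (hV ζ)
    refine tendsto_nhds_unique h1 (tendsto_const_nhds.congr fun n => ?_)
    exact (congrArg (fun S : H →L[ℂ] H => S ζ) (s n).2.2.2.2).symm
  have := fin_op hfin hVM hVV
  rw [← mul_one F, ← this, ← mul_assoc, hFV, zero_mul]

end Ext
end KVN

namespace KVN
open Filter Topology

section Normal
variable {H : Type} [NormedAddCommGroup H] [InnerProductSpace ℂ H] [CompleteSpace H]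
variable {M : VonNeumannAlgebra H}

lemma opLE_iff {x y : H →L[ℂ] H} : OpLE x y ↔ x ≤ y := (ContinuousLinearMap.le_def x y).symm

lemma ev_tendsto {f : ↥M →ₗ[ℂ] ℂ} (hp : VNIsPos f) (hn : VNIsNormal f) {x : ℕ → H →L[ℂ] H}
    {y : H →L[ℂ] H} (hx : ∀ n, x n ∈ M) (hy : y ∈ M) (h0 : ∀ n, 0 ≤ x n) (hm : Monotone x)
    (hl : ∀ ζ, Tendsto (fun n => x n ζ) atTop (𝓝 (y ζ))) :
    Tendsto (fun n => ev f (x n)) atTop (𝓝 (ev f y)) := by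
  have hin : ∀ ζ, Tendsto (fun n => (inner ℂ (x n ζ) ζ : ℂ)) atTop (𝓝 (inner ℂ (y ζ) ζ)) :=
    fun ζ => (hl ζ).inner tendsto_const_nhds
  have hle : ∀ n, x n ≤ y := by
    intro n
    rw [le_iff]
    intro ζ
    exact ge_of_tendsto (hin ζ) (eventually_atTop.2 ⟨n, fun m hmn => le_iff.1 (hm hmn) ζ⟩)
  have hlub := hn ℕ (fun n => ⟨x n, hx n⟩) ⟨y, hy⟩
    (fun n => (ContinuousLinearMap.nonneg_iff_isPositive _).1 (h0 n))
    (fun i j hij => opLE_iff.2 (hm hij))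
    ⟨‖y‖, fun n => CStarAlgebra.norm_le_norm_of_nonneg_of_le (h0 n) (hle n)⟩
    (fun n => opLE_iff.2 (hle n))
    (fun z hz => opLE_iff.2 (le_iff.2 fun ζ =>
      le_of_tendsto' (hin ζ) fun n => le_iff.1 (opLE_iff.1 (hz n)) ζ))
  apply tendsto_atTop_isLUB
  · exact fun i j hij => ev_mono hp (hx i) (hx j) (hm hij)
  · constructor
    · rintro _ ⟨n, rfl⟩
      exact ev_mono hp (hx n) hy (hle n)
    · intro t ht
      have : (⟨t, (f ⟨y, hy⟩).im⟩ : ℂ) ∈ upperBounds (Set.range fun i => f ⟨x i, hx i⟩) := by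
        rintro _ ⟨n, rfl⟩
        have h1 := hlub.1 ⟨n, rfl⟩
        rw [Complex.le_def] at h1 ⊢
        refine ⟨?_, h1.2⟩
        have h3 : ev f (x n) ≤ t := ht ⟨n, rfl⟩
        rwa [ev_mk f (hx n)] at h3
      have h2 := hlub.2 this
      rw [ev_mk f hy]
      exact (Complex.le_def.1 h2).1

lemma ev_tendsto_anti {f : ↥M →ₗ[ℂ] ℂ} (hp : VNIsPos f) (hn : VNIsNormal f) {x : ℕ → H →L[ℂ] H}
    {y : H →L[ℂ] H} (hx : ∀ n, x n ∈ M) (hy : y ∈ M) (hm : Antitone x)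
    (hl : ∀ ζ, Tendsto (fun n => x n ζ) atTop (𝓝 (y ζ))) :
    Tendsto (fun n => ev f (x n)) atTop (𝓝 (ev f y)) := by
  have h := ev_tendsto hp hn (x := fun n => x 0 - x n) (y := x 0 - y)
    (fun n => sub_mem (hx 0) (hx n)) (sub_mem (hx 0) hy)
    (fun n => sub_nonneg.2 (hm (Nat.zero_le n))) (fun i j hij => sub_le_sub_left (hm hij) _)
    (fun ζ => (tendsto_const_nhds (x := x 0 ζ)).sub (hl ζ))
  have h2 := (tendsto_const_nhds (x := ev f (x 0))).sub h
  rw [ev_sub f (hx 0) hy] at h2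
  simp only [fun n => ev_sub f (hx 0) (hx n)] at h2
  simpa using h2

lemma res {S : H →L[ℂ] H} (hS : 0 ≤ S) : ∃ a : H →L[ℂ] H, (1 + S) * a = 1 ∧ a * (1 + S) = 1 ∧
    0 ≤ a ∧ a ≤ 1 ∧ 1 - S ≤ a := by
  have hu : IsUnit (1 + S) := CStarAlgebra.isUnit_of_le 1 (le_add_of_nonneg_right hS)
  obtain ⟨u, hu⟩ := hu
  have h1 : (1 + S) * (u⁻¹ : (H →L[ℂ] H)ˣ) = 1 := by rw [← hu]; simp
  have h2 : ((u⁻¹ : (H →L[ℂ] H)ˣ) : H →L[ℂ] H) * (1 + S) = 1 := by rw [← hu]; simp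
  have h3 : ((u⁻¹ : (H →L[ℂ] H)ˣ) : H →L[ℂ] H) ≤ 1 := by
    have := CStarAlgebra.inv_le_inv (A := H →L[ℂ] H) (a := 1) (b := u) (by simp)
      (by rw [hu]; simpa using hS)
    simpa using this
  have hA : 0 ≤ 1 + S := add_nonneg zero_le_one hS
  have h4 : 0 ≤ ((u⁻¹ : (H →L[ℂ] H)ˣ) : H →L[ℂ] H) := by
    set b := ((u⁻¹ : (H →L[ℂ] H)ˣ) : H →L[ℂ] H)
    have hb : star b * (1 + S) = 1 := by
      have := congrArg star h1
      simpa [hS.isSelfAdjoint.star_eq] using this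
    have : star b * (1 + S) * b = b := by rw [hb, one_mul]
    rw [← this]
    exact star_left_conjugate_nonneg hA b
  refine ⟨_, h1, h2, h4, h3, ?_⟩
  set b := ((u⁻¹ : (H →L[ℂ] H)ˣ) : H →L[ℂ] H)
  have h5 : 0 ≤ S * b * S := hS.isSelfAdjoint.conjugate_nonneg h4
  have h6 : S * b = 1 - b := by rw [← h1]; noncomm_ring
  have h7 : b * S = 1 - b := by rw [← h2]; noncomm_ring
  rw [h6, sub_mul, one_mul, h7] at h5
  rw [← sub_nonneg]
  have : b - (1 - S) = S - (1 - b) := by abel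
  rwa [this]

lemma res_mem {S a : H →L[ℂ] H} (h1 : (1 + S) * a = 1) (h2 : a * (1 + S) = 1) (hS : S ∈ M) :
    a ∈ M := by
  rw [mem_iff]
  intro y hy
  have h3 := mem_iff.1 (add_mem (one_mem M) hS) y hy
  calc y * a = a * ((1 + S) * y) * a := by rw [← mul_assoc, h2, one_mul]
    _ = a * (y * (1 + S)) * a := by rw [h3]
    _ = a * y * ((1 + S) * a) := by noncomm_ring
    _ = _ := by rw [h1, mul_one]

lemma res_anti {S S' a a' : H →L[ℂ] H} (hS : 0 ≤ S) (h : S ≤ S') (h1 : (1 + S) * a = 1)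
    (h2 : a * (1 + S) = 1) (h1' : (1 + S') * a' = 1) (h2' : a' * (1 + S') = 1) : a' ≤ a := by
  have := CStarAlgebra.inv_le_inv (A := H →L[ℂ] H) (a := ⟨1 + S, a, h1, h2⟩)
    (b := ⟨1 + S', a', h1', h2'⟩) (add_nonneg zero_le_one hS) (add_le_add_right h 1)
  exact this

lemma norm_sq_le_of {X : H →L[ℂ] H} {c : ℝ} (h : star X * X ≤ ((c : ℝ) : ℂ) • 1) (ζ : H) :
    ‖X ζ‖ ^ 2 ≤ c * ‖ζ‖ ^ 2 := by
  have := le_iff.1 h ζ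
  rw [inner_star_mul] at this
  have e : inner ℂ ((((c : ℝ) : ℂ) • (1 : H →L[ℂ] H)) ζ) ζ = ((c * ‖ζ‖ ^ 2 : ℝ) : ℂ) := by
    change inner ℂ (((c : ℝ) : ℂ) • ζ) ζ = _
    rw [inner_smul_left, inner_self_eq_norm_sq_to_K]; simp
  rw [e] at this
  exact_mod_cast this

lemma inj_op {h T : H →L[ℂ] H} (hh : IsSelfAdjoint h) (h1 : rp h = 1) (hT : h * T = 0) : T = 0 := by
  have h2 : star T * h = 0 := by simpa [hh.star_eq] using congrArg star hT
  have h3 := rp_zero h2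
  rw [h1, mul_one] at h3
  simpa using congrArg star h3

/-- A positive injective `h` in the algebra that makes all `X k * h` contractive. -/
lemma exists_h {g : ↥M →ₗ[ℂ] ℂ} (hg : VNIsPos g) (hgn : VNIsNormal g) (hgf : Faithful g)
    (X : ℕ → H →L[ℂ] H) (hX : ∀ k, X k ∈ M) (hs : ∀ k, ev g (star (X k) * X k) ≤ (1 / 2) ^ k) :
    ∃ h ∈ M, 0 ≤ h ∧ (∀ T, h * T = 0 → T = 0) ∧ ∀ k, ‖X k * h‖ ≤ 1 := by
  set S : ℕ → ℕ → H →L[ℂ] H := fun n N => ∑ k ∈ Finset.Ico n N, star (X k) * X k with hS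
  have hXX : ∀ k, star (X k) * X k ∈ M := fun k => mul_mem (star_mem (hX k)) (hX k)
  have hSM : ∀ n N, S n N ∈ M := fun n N => sum_mem fun k _ => hXX k
  have hS0 : ∀ n N, 0 ≤ S n N := fun n N => Finset.sum_nonneg fun k _ => star_mul_self_nonneg _
  choose a ha1 ha2 ha3 ha4 ha5 using fun n N => res (hS0 n N)
  have haM : ∀ n N, a n N ∈ M := fun n N => res_mem (ha1 n N) (ha2 n N) (hSM n N)
  have hanti : ∀ n, Antitone (a n) := by
    intro n i j hij
    refine res_anti (hS0 n i) ?_ (ha1 _ _) (ha2 _ _) (ha1 _ _) (ha2 _ _)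
    exact Finset.sum_le_sum_of_subset_of_nonneg (Finset.Ico_subset_Ico_right hij)
      fun k _ _ => star_mul_self_nonneg _
  choose b hb1 hb2 hb3 using fun n => vig (a n) (ha3 n) (hanti n)
  have hbM : ∀ n, b n ∈ M := fun n => mem_of_tendsto (haM n) (hb1 n)
  have hb1' : ∀ n, b n ≤ 1 := fun n => (hb3 n 0).trans (ha4 n 0)
  have hnorm : ∀ n N, ‖a n N‖ ≤ 1 := fun n N =>
    (CStarAlgebra.norm_le_one_iff_of_nonneg _ (ha3 n N)).2 (ha4 n N)
  have hbs : ∀ n, IsSelfAdjoint (b n) := fun n => (hb2 n).isSelfAdjoint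
  have hker : ∀ n ζ, b 0 ζ = 0 → b n ζ = 0 := by
    intro n ζ hζ
    have h1 : Tendsto (fun N => a 0 N ζ) atTop (𝓝 0) := by rw [← hζ]; exact hb1 0 ζ
    have h2 : ∀ N, n ≤ N → a n N = a 0 N + a n N * S 0 n * a 0 N := by
      intro N hN
      have h3 : S 0 N = S 0 n + S n N := (Finset.sum_Ico_consecutive _ (Nat.zero_le n) hN).symm
      calc a n N = a n N * ((1 + S 0 N) * a 0 N) := by rw [ha1, mul_one]
        _ = (a n N * (1 + S n N)) * a 0 N + a n N * S 0 n * a 0 N := by rw [h3]; noncomm_ring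
        _ = _ := by rw [ha2, one_mul]
    have h4 : Tendsto (fun N => a 0 N ζ + a n N (S 0 n (a 0 N ζ))) atTop (𝓝 0) := by
      have h5 : Tendsto (fun N => a n N (S 0 n (a 0 N ζ))) atTop (𝓝 0) := by
        have h6 : Tendsto (fun N => S 0 n (a 0 N ζ)) atTop (𝓝 0) := by
          have := ((S 0 n).continuous.tendsto 0).comp h1
          rw [map_zero] at this
          exact this
        refine squeeze_zero_norm (fun N => ?_) (by simpa using h6.norm)
        exact (ContinuousLinearMap.le_of_opNorm_le _ (hnorm n N) _).trans (by simp)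
      simpa using h1.add h5
    refine tendsto_nhds_unique (hb1 n ζ) (h4.congr' ?_)
    filter_upwards [eventually_ge_atTop n] with N hN
    exact (congrArg (fun S : H →L[ℂ] H => S ζ) (h2 N hN)).symm
  set Q := 1 - rp (b 0) with hQ
  have hQp : IsStarProjection Q := (rp_proj _).one_sub
  have hQM : Q ∈ M := sub_mem (one_mem M) (rp_mem (hbM 0))
  have hbQ0 : b 0 * Q = 0 := by
    have := congrArg star (rp_mul (b 0))
    rw [star_mul, (rp_proj _).2.star_eq, (hbs 0).star_eq] at this
    rw [hQ, mul_sub, mul_one, this, sub_self]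
  have hbQ : ∀ n, b n * Q = 0 := by
    intro n
    ext ζ
    exact hker n (Q ζ) (congrArg (fun S : H →L[ℂ] H => S ζ) hbQ0)
  have hQle : ∀ n, Q ≤ 1 - b n := by
    intro n
    have h1 : Q * b n = 0 := by
      simpa [hQp.2.star_eq, (hbs n).star_eq] using congrArg star (hbQ n)
    have h2 : (1 - Q) * b n * (1 - Q) ≤ (1 - Q) * 1 * (1 - Q) :=
      IsSelfAdjoint.conjugate_le_conjugate (hb1' n) hQp.one_sub.2
    have h3 : (1 - Q) * b n * (1 - Q) = b n := by
      rw [sub_mul, h1, one_mul, sub_zero, mul_sub, mul_one, hbQ, sub_zero]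
    have h4 : (1 - Q) * (1 - Q) = 1 - Q := hQp.one_sub.1
    rw [h3, mul_one, h4] at h2
    exact le_sub_comm.1 h2
  have hsum : ∀ n N, ev g (1 - a n N) ≤ 2 * (1 / 2) ^ n := by
    intro n N
    have h1 : ev g (1 - a n N) ≤ ev g (S n N) :=
      ev_mono hg (sub_mem (one_mem M) (haM n N)) (hSM n N) (sub_le_comm.1 (ha5 n N))
    have h2 : ∀ N, ev g (S n N) ≤ ∑ k ∈ Finset.Ico n N, (1 / 2 : ℝ) ^ k := by
      intro N
      rcases le_total N n with h | h
      · simp [hS, Finset.Ico_eq_empty_of_le h, ev_zero]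
      · induction N, h using Nat.le_induction with
        | base => simp [hS, ev_zero]
        | succ m hm ih =>
          have h3 : S n (m + 1) = S n m + star (X m) * X m := Finset.sum_Ico_succ_top hm _
          rw [h3, ev_add g (hSM n m) (hXX m), Finset.sum_Ico_succ_top hm]
          exact add_le_add ih (hs m)
    have h3 : ∑ k ∈ Finset.Ico n N, (1 / 2 : ℝ) ^ k ≤ 2 * (1 / 2) ^ n := by
      rcases le_total N n with h | h
      · rw [Finset.Ico_eq_empty_of_le h]; simp
      · have : ∑ k ∈ Finset.Ico n N, (1 / 2 : ℝ) ^ k = 2 * (1 / 2) ^ n - 2 * (1 / 2) ^ N := by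
          clear h1
          induction N, h using Nat.le_induction with
          | base => simp
          | succ m hm ih =>
            rw [Finset.sum_Ico_succ_top hm, ih]; ring
        rw [this]
        have : (0 : ℝ) ≤ 2 * (1 / 2) ^ N := by positivity
        linarith
    exact h1.trans ((h2 N).trans h3)
  have hbev : ∀ n, ev g (1 - b n) ≤ 2 * (1 / 2) ^ n := by
    intro n
    have : Tendsto (fun N => ev g (1 - a n N)) atTop (𝓝 (ev g (1 - b n))) :=
      ev_tendsto hg hgn (fun N => sub_mem (one_mem M) (haM n N)) (sub_mem (one_mem M) (hbM n))
        (fun N => sub_nonneg.2 (ha4 n N)) (fun i j hij => sub_le_sub_left (hanti n hij) 1)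
        (fun ζ => (tendsto_const_nhds (x := ζ)).sub (hb1 n ζ))
    exact le_of_tendsto' this (hsum n)
  have hQ0 : Q = 0 := by
    apply ev_faithful hg hgf hQM
    have hQQ : star Q * Q = Q := by rw [hQp.2.star_eq]; exact hQp.1
    rw [hQQ]
    have h1 : Tendsto (fun n : ℕ => 2 * (1 / 2 : ℝ) ^ n) atTop (𝓝 0) := by
      have := (tendsto_pow_atTop_nhds_zero_of_lt_one (r := (1 / 2 : ℝ)) (by norm_num)
        (by norm_num)).const_mul 2
      simpa using this
    exact ge_of_tendsto' h1 fun n =>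
      (ev_mono hg hQM (sub_mem (one_mem M) (hbM n)) (hQle n)).trans (hbev n)
  refine ⟨b 0, hbM 0, hb2 0, fun T => inj_op (hbs 0) (sub_eq_zero.1 hQ0).symm, fun k => ?_⟩
  apply ContinuousLinearMap.opNorm_le_bound _ zero_le_one
  intro ζ
  have h1 : Tendsto (fun N => ‖X k (a 0 N ζ)‖) atTop (𝓝 ‖X k (b 0 ζ)‖) :=
    (((X k).continuous.tendsto _).comp (hb1 0 ζ)).norm
  refine le_of_tendsto h1 ?_
  filter_upwards [eventually_gt_atTop k] with N hN
  have h2 : star (X k) * X k ≤ 1 + S 0 N := by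
    have : star (X k) * X k ≤ S 0 N :=
      Finset.single_le_sum (f := fun k => star (X k) * X k) (fun k _ => star_mul_self_nonneg _)
        (Finset.mem_Ico.2 ⟨Nat.zero_le _, hN⟩)
    exact this.trans (le_add_of_nonneg_left zero_le_one)
  have h3 := IsSelfAdjoint.conjugate_le_conjugate h2 (ha3 0 N).isSelfAdjoint
  rw [ha2, one_mul] at h3
  have h4 : star (X k * a 0 N) * (X k * a 0 N) ≤ (((1 : ℝ)) : ℂ) • 1 := by
    rw [Complex.ofReal_one, one_smul]
    refine le_trans (le_of_eq ?_) (h3.trans (ha4 0 N))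
    rw [star_mul, (ha3 0 N).isSelfAdjoint.star_eq]; noncomm_ring
  have h5 := norm_sq_le_of h4 ζ
  rw [one_mul] at h5 ⊢
  exact (sq_le_sq₀ (norm_nonneg _) (norm_nonneg _)).1 h5

end Normal
end KVN

namespace KVN
open Filter Topology

section Core
variable {H : Type} [NormedAddCommGroup H] [InnerProductSpace ℂ H] [CompleteSpace H]
variable {M : VonNeumannAlgebra H}

lemma rp_norm (a : H →L[ℂ] H) : ‖rp a‖ ≤ 1 := (rp_proj a).norm_le

lemma rp_le {a b : H →L[ℂ] H} (h : rp b * a = a) : rp a ≤ rp b := by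
  rw [(rp_proj a).le_iff_mul_eq_right (rp_proj b)]
  have h1 : (rp b - 1) * a = 0 := by rw [sub_mul, h, one_mul, sub_self]
  have h2 := rp_zero h1
  rw [sub_mul, one_mul] at h2
  exact sub_eq_zero.1 h2

/-- Spectral projections of `h` near zero. -/
lemma exists_E {h : H →L[ℂ] H} (hM : h ∈ M) (h0 : 0 ≤ h) (hinj : ∀ T, h * T = 0 → T = 0) :
    ∃ E : ℕ → H →L[ℂ] H, (∀ n, IsStarProjection (E n)) ∧ (∀ n, E n ∈ M) ∧ Antitone E ∧
      (∀ ζ, Tendsto (fun n => E n ζ) atTop (𝓝 0)) ∧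
      ∀ (x : H →L[ℂ] H) n, ‖x * (1 - E n)‖ ≤ 2 ^ n * ‖x * h‖ := by
  have hsa : IsSelfAdjoint h := h0.isSelfAdjoint
  set s : ℕ → ℝ := fun n => (1 / 2) ^ n with hs
  have hspos : ∀ n, 0 < s n := fun n => by simp only [hs]; positivity
  have hss : ∀ n, s n = 2 * s (n + 1) := fun n => by simp only [hs, pow_succ]; ring
  set p : ℕ → H →L[ℂ] H := fun n => cfc (fun t : ℝ => max (t - s n) 0) h with hp
  have hpM : ∀ n, p n ∈ M := fun n => cfc_mem' hM _
  have hpsa : ∀ n, star (p n) = p n := fun n => (cfc_predicate _ h : IsSelfAdjoint (p n)).star_eq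
  have hmono : Monotone fun n => rp (p n) := by
    apply monotone_nat_of_le_succ
    intro n
    apply rp_le
    have h1 : p n = p (n + 1) *
        cfc (fun t : ℝ => max (t - s n) 0 / max (t - s (n + 1)) (s (n + 1))) h := by
      have hc : ContinuousOn
          (fun t : ℝ => max (t - s n) 0 / max (t - s (n + 1)) (s (n + 1))) (spectrum ℝ h) := by
        apply Continuous.continuousOn
        apply Continuous.div (by fun_prop) (by fun_prop)
        intro t
        exact (lt_max_of_lt_right (hspos _)).ne'
      rw [hp]
      simp only
      rw [← cfc_mul _ _ h (by fun_prop) hc]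
      congr 1
      ext t
      have h2 := hss n
      have h3 := hspos (n + 1)
      rcases le_total t (s n) with ht | ht
      · rw [max_eq_right (by linarith : t - s n ≤ 0)]; simp
      · rw [max_eq_left (by linarith : s (n + 1) ≤ t - s (n + 1)),
          max_eq_left (by linarith : 0 ≤ t - s (n + 1)), mul_div_cancel₀]
        have : 0 < t - s (n + 1) := by linarith
        exact this.ne'
    rw [h1, ← mul_assoc, rp_mul]
  obtain ⟨Q, hQp, hQ, hQle⟩ := proj_lim (fun n => rp (p n)) (fun n => rp_proj _) hmono
  have hpE : ∀ n, p n * (1 - rp (p n)) = 0 := by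
    intro n
    have := congrArg star (rp_mul (p n))
    rw [star_mul, (rp_proj _).2.star_eq, hpsa] at this
    rw [mul_sub, mul_one, this, sub_self]
  have hhE : ∀ n, ‖h * (1 - rp (p n))‖ ≤ s n := by
    intro n
    have h1 : h = cfc (fun t : ℝ => min t (s n)) h + p n := by
      rw [hp]
      simp only
      rw [← cfc_add h _ _ (by fun_prop) (by fun_prop)]
      conv_lhs => rw [← cfc_id' ℝ h]
      congr 1
      ext t
      rcases le_total t (s n) with ht | ht
      · rw [min_eq_left ht, max_eq_right (by linarith)]; simp
      · rw [min_eq_right ht, max_eq_left (by linarith)]; ring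
    have h2 : ‖cfc (fun t : ℝ => min t (s n)) h‖ ≤ s n := by
      apply norm_cfc_le (hspos n).le
      intro t ht
      have := spectrum_nonneg_of_nonneg h0 ht
      rw [Real.norm_eq_abs, abs_of_nonneg (le_min this (hspos n).le)]
      exact min_le_right _ _
    have h3 : h * (1 - rp (p n)) = cfc (fun t : ℝ => min t (s n)) h * (1 - rp (p n)) := by
      conv_lhs => rw [h1, add_mul, hpE, add_zero]
    rw [h3]
    calc _ ≤ ‖cfc (fun t : ℝ => min t (s n)) h‖ * ‖1 - rp (p n)‖ := norm_mul_le _ _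
      _ ≤ s n * 1 := mul_le_mul h2 (rp_proj _).one_sub.norm_le (norm_nonneg _) (hspos n).le
      _ = s n := mul_one _
  have hQ1 : 1 - Q = 0 := by
    apply hinj
    ext ζ
    have h1 : Tendsto (fun n => (h * (1 - rp (p n))) ζ) atTop (𝓝 ((h * (1 - Q)) ζ)) :=
      (h.continuous.tendsto _).comp ((tendsto_const_nhds (x := ζ)).sub (hQ ζ))
    refine tendsto_nhds_unique h1 (squeeze_zero_norm (a := fun n => s n * ‖ζ‖) (fun n => ?_) ?_)
    · exact ContinuousLinearMap.le_of_opNorm_le _ (hhE n) _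
    · have := (tendsto_pow_atTop_nhds_zero_of_lt_one (r := (1 / 2 : ℝ)) (by norm_num)
        (by norm_num)).mul_const ‖ζ‖
      rw [zero_mul] at this
      exact this
  have hQ1 : Q = 1 := (sub_eq_zero.1 hQ1).symm
  refine ⟨fun n => 1 - rp (p n), fun n => (rp_proj _).one_sub,
    fun n => sub_mem (one_mem M) (rp_mem (hpM n)), fun i j hij => sub_le_sub_left (hmono hij) 1,
    fun ζ => ?_, fun x n => ?_⟩
  · have := (tendsto_const_nhds (x := ζ)).sub (hQ ζ)
    rw [hQ1] at this
    simpa using this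
  · set G := cfc (fun t : ℝ => (max t (s n))⁻¹) h with hG
    have hc : ContinuousOn (fun t : ℝ => (max t (s n))⁻¹) (spectrum ℝ h) := by
      apply Continuous.continuousOn
      apply Continuous.inv₀ (by fun_prop)
      intro t
      exact (lt_max_of_lt_right (hspos _)).ne'
    have h1 : h * G * p n = p n := by
      have e : h * G = cfc (fun t : ℝ => t * (max t (s n))⁻¹) h := by
        rw [cfc_mul _ _ h (by fun_prop) hc, cfc_id' ℝ h]
      have hc2 : ContinuousOn (fun t : ℝ => t * (max t (s n))⁻¹) (spectrum ℝ h) :=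
        continuousOn_id.mul hc
      rw [e, hp]
      simp only
      rw [← cfc_mul _ _ h hc2 (by fun_prop)]
      congr 1
      ext t
      rcases le_total t (s n) with ht | ht
      · rw [max_eq_right (by linarith : t - s n ≤ 0)]; simp
      · rw [max_eq_left ht, mul_inv_cancel₀ ((hspos n).trans_le ht).ne', one_mul]
    have h2 : h * G * rp (p n) = rp (p n) := by
      have h3 : (h * G - 1) * p n = 0 := by rw [sub_mul, h1, one_mul, sub_self]
      have h4 := rp_zero h3
      rw [sub_mul, one_mul] at h4
      exact sub_eq_zero.1 h4
    have hGn : ‖G‖ ≤ 2 ^ n := by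
      apply norm_cfc_le (by positivity)
      intro t _
      rw [norm_inv, Real.norm_eq_abs, abs_of_pos (lt_max_of_lt_right (hspos _))]
      have : (2 : ℝ) ^ n = (s n)⁻¹ := by simp [hs]
      rw [this]
      exact inv_anti₀ (hspos n) (le_max_right _ _)
    have e5 : x * (1 - (1 - rp (p n))) = (x * h) * G * rp (p n) := by
      rw [sub_sub_cancel, mul_assoc x h G, mul_assoc x, h2]
    rw [e5]
    calc ‖x * h * G * rp (p n)‖ ≤ ‖x * h‖ * ‖G‖ * ‖rp (p n)‖ := norm_mul₃_le
      _ ≤ ‖x * h‖ * 2 ^ n * 1 := by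
        gcongr
        exact rp_norm _
      _ = _ := by ring

lemma core {g f : ↥M →ₗ[ℂ] ℂ} (hfin : VNFinite M) (hg : VNIsPos g) (hgn : VNIsNormal g)
    (hgf : Faithful g) (hf : VNIsPos f) (hfn : VNIsNormal f)
    (x : ℕ → H →L[ℂ] H) (hx : ∀ k, x k ∈ M) (hs : ∀ k, ev g (star (x k) * x k) ≤ (1 / 32) ^ k) :
    ∃ (φ : ℕ → ℕ) (x' u v F : ℕ → H →L[ℂ] H), StrictMono φ ∧ (∀ k, x' k ∈ M) ∧ (∀ k, u k ∈ M) ∧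
      (∀ k, v k ∈ M) ∧ (∀ k, F k ∈ M) ∧ (∀ k, x (φ k) = x' k + u k + v k) ∧
      (∀ k, ‖u k‖ ≤ (1 / 2) ^ k) ∧ (∀ k, ev f (star (v k) * v k) ≤ (1 / 2) ^ k) ∧
      (∀ k, IsStarProjection (F k)) ∧ Antitone F ∧
      (∀ ζ, Tendsto (fun n => F n ζ) atTop (𝓝 0)) ∧ ∀ m k, m ≤ k → F m * x' k = x' k := by
  obtain ⟨h, hM, h0, hinj, hh⟩ := exists_h hg hgn hgf (fun k => (((4 : ℝ) ^ k : ℝ) : ℂ) • x k)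
    (fun k => SMulMemClass.smul_mem _ (hx k)) (by
      intro k
      have e : star ((((4 : ℝ) ^ k : ℝ) : ℂ) • x k) * ((((4 : ℝ) ^ k : ℝ) : ℂ) • x k)
          = ((((16 : ℝ) ^ k : ℝ)) : ℂ) • (star (x k) * x k) := by
        rw [star_smul, smul_mul_smul_comm]
        congr 1
        rw [Complex.star_def, Complex.conj_ofReal, ← Complex.ofReal_mul, ← mul_pow]
        norm_num
      rw [e, ev_smul g _ (mul_mem (star_mem (hx k)) (hx k))]
      calc (16 : ℝ) ^ k * ev g (star (x k) * x k) ≤ 16 ^ k * (1 / 32) ^ k := by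
            gcongr; exact hs k
        _ = (1 / 2) ^ k := by rw [← mul_pow]; norm_num)
  have hh' : ∀ k, ‖x k * h‖ ≤ (1 / 4) ^ k := by
    intro k
    have h1 := hh k
    rw [smul_mul_assoc, norm_smul, Complex.norm_real, Real.norm_eq_abs, abs_of_pos (by positivity)]
      at h1
    rw [one_div, inv_pow, ← one_div, le_div_iff₀ (by positivity)]
    linarith
  obtain ⟨E, hE, hEM, hanti, hlim, hEx⟩ := exists_E hM h0 hinj
  have hEs : ∀ n, star (E n) = E n := fun n => (hE n).2.star_eq
  have hEE : ∀ n, E n * E n = E n := fun n => (hE n).1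
  have hev : ∀ (k n : ℕ), ∃ j, n < j ∧ ev f (star (x n * E j) * (x n * E j)) ≤ (1 / 2) ^ k := by
    intro k n
    have h1 : Tendsto (fun j => ev f (E j)) atTop (𝓝 0) := by
      have := ev_tendsto_anti hf hfn hEM (zero_mem M) hanti (by simpa using hlim)
      rwa [ev_zero] at this
    have h2 : Tendsto (fun j => ‖x n‖ ^ 2 * ev f (E j)) atTop (𝓝 0) := by
      simpa using h1.const_mul (‖x n‖ ^ 2)
    obtain ⟨j, hj1, hj2⟩ := ((h2.eventually (ge_mem_nhds
      (show (0 : ℝ) < (1 / 2) ^ k by positivity))).and (eventually_gt_atTop n)).exists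
    refine ⟨j, hj2, le_trans ?_ hj1⟩
    have e1 : star (x n * E j) * (x n * E j) ≤ ((‖x n‖ ^ 2 : ℝ) : ℂ) • E j := by
      rw [le_iff]
      intro ζ
      rw [inner_star_mul]
      change _ ≤ inner ℂ (((‖x n‖ ^ 2 : ℝ) : ℂ) • (E j ζ)) ζ
      rw [inner_smul_left, proj_inner (hE j), Complex.conj_ofReal, ← Complex.ofReal_mul,
        Complex.real_le_real, ← mul_pow]
      gcongr
      exact (x n).le_opNorm _
    have hm := mul_mem (hx n) (hEM j)
    have e2 := ev_mono hf (mul_mem (star_mem hm) hm) (SMulMemClass.smul_mem _ (hEM j)) e1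
    rwa [ev_smul f _ (hEM j)] at e2
  choose nx hnx1 hnx2 using hev
  let φ : ℕ → ℕ := fun k => Nat.rec 0 (fun k n => nx k n) k
  have hφs : ∀ k, φ (k + 1) = nx k (φ k) := fun k => rfl
  have hφ : StrictMono φ := strictMono_nat_of_lt_succ fun k => hnx1 k (φ k)
  set D : ℕ → H →L[ℂ] H := fun k => E (φ k) - E (φ (k + 1)) with hD
  have hmulr : ∀ i j, i ≤ j → E i * E j = E j := fun i j hij =>
    ((hE j).le_iff_mul_eq_right (hE i)).1 (hanti hij)
  have hmull : ∀ i j, i ≤ j → E j * E i = E j := fun i j hij =>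
    ((hE j).le_iff_mul_eq_left (hE i)).1 (hanti hij)
  have hDM : ∀ k, D k ∈ M := fun k => sub_mem (hEM _) (hEM _)
  have hED : ∀ m k, m ≤ k → E (φ m) * D k = D k := by
    intro m k hmk
    rw [hD]
    simp only
    rw [mul_sub, hmulr _ _ (hφ.monotone hmk), hmulr _ _ (hφ.monotone (hmk.trans (Nat.le_succ k)))]
  have hDE : ∀ m k, m ≤ k → D k * E (φ m) = D k := by
    intro m k hmk
    rw [hD]
    simp only
    rw [sub_mul, hmull _ _ (hφ.monotone hmk), hmull _ _ (hφ.monotone (hmk.trans (Nat.le_succ k)))]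
  have hDD : ∀ k, D k * D k = D k := by
    intro k
    have h1 := hDE k k le_rfl
    have h2 : D k * E (φ (k + 1)) = 0 := by
      rw [hD]
      simp only
      rw [sub_mul, hmulr _ _ (hφ.monotone (Nat.le_succ k)), hEE, sub_self]
    nth_rewrite 2 [hD]
    simp only
    rw [mul_sub, h1, h2, sub_zero]
  have hDne : ∀ j k, j ≠ k → D j * D k = 0 := by
    intro j k hjk
    rcases lt_or_gt_of_ne hjk with hlt | hlt
    · have e1 : E (φ (j + 1)) * D k = D k := hED _ _ hlt
      have e2 : E (φ j) * D k = D k := hED _ _ hlt.le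
      nth_rewrite 1 [hD]
      simp only
      rw [sub_mul, e1, e2, sub_self]
    · have e1 : D j * E (φ (k + 1)) = D j := hDE _ _ hlt
      have e2 : D j * E (φ k) = D j := hDE _ _ hlt.le
      nth_rewrite 2 [hD]
      simp only
      rw [mul_sub, e1, e2, sub_self]
  set x' : ℕ → H →L[ℂ] H := fun k => x (φ k) * D k with hx'
  have hx'M : ∀ k, x' k ∈ M := fun k => mul_mem (hx _) (hDM k)
  set d : ℕ → ℂ := fun k => (((1 / 2 : ℝ) ^ k / (1 + ‖x' k‖) : ℝ) : ℂ) with hd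
  have hdpos : ∀ k, 0 < (1 / 2 : ℝ) ^ k / (1 + ‖x' k‖) := fun k => by positivity
  have hd0 : ∀ k, d k ≠ 0 := fun k => by
    simp only [hd]
    exact_mod_cast (hdpos k).ne'
  have hsum : Summable fun k => d k • x' k := by
    apply Summable.of_norm_bounded (g := fun k => (1 / 2 : ℝ) ^ k)
      (summable_geometric_of_lt_one (by norm_num) (by norm_num))
    intro k
    rw [norm_smul, hd]
    simp only
    rw [Complex.norm_real, Real.norm_eq_abs, abs_of_pos (hdpos k), div_mul_eq_mul_div,
      div_le_iff₀ (by positivity)]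
    have : (0 : ℝ) ≤ (1 / 2) ^ k := by positivity
    nlinarith [norm_nonneg (x' k)]
  set Y : H →L[ℂ] H := ∑' k, d k • x' k with hY
  have hYM : Y ∈ M := by
    have h1 := hsum.hasSum.tendsto_sum_nat
    exact (isClosed_vN M).mem_of_tendsto h1 (Eventually.of_forall fun n =>
      sum_mem fun k _ => SMulMemClass.smul_mem _ (hx'M k))
  have hYD : ∀ k, Y * D k = d k • x' k := by
    intro k
    rw [hY, ← hsum.tsum_mul_right, tsum_eq_single k]
    · rw [smul_mul_assoc, hx']
      simp only
      rw [mul_assoc, hDD]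
    · intro j hj
      rw [smul_mul_assoc, hx']
      simp only
      rw [mul_assoc, hDne j k hj, mul_zero, smul_zero]
  set F : ℕ → H →L[ℂ] H := fun m => rp (Y * E (φ m)) with hF
  have hFM : ∀ m, F m ∈ M := fun m => rp_mem (mul_mem hYM (hEM _))
  have hFanti : Antitone F := by
    apply antitone_nat_of_succ_le
    intro m
    apply rp_le
    have : Y * E (φ (m + 1)) = Y * E (φ m) * E (φ (m + 1)) := by
      rw [mul_assoc, hmulr _ _ (hφ.monotone (Nat.le_succ m))]
    rw [this, ← mul_assoc, rp_mul]
  obtain ⟨Q, hQp, hQ, hQle⟩ := proj_lim (fun m => 1 - F m) (fun m => (rp_proj _).one_sub)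
    (fun i j hij => sub_le_sub_left (hFanti hij) 1)
  have hQM : Q ∈ M := mem_of_tendsto (fun m => sub_mem (one_mem M) (hFM m)) hQ
  have hQ1 : 1 - Q = 0 := by
    refine vanish hfin hg hgf hYM (fun m => E (φ m)) (fun m => hE _) (fun m => hEM _)
      (fun i j hij => hanti (hφ.monotone hij)) (fun ζ => (hlim ζ).comp hφ.tendsto_atTop)
      (sub_mem (one_mem M) hQM) hQp.one_sub ?_
    intro m T hT
    have h1 : T * F m = 0 := rp_zero hT
    have h2 : 1 - Q ≤ F m := sub_le_comm.1 (hQle m)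
    have h3 : F m * (1 - Q) = 1 - Q := (hQp.one_sub.le_iff_mul_eq_right (rp_proj _)).1 h2
    rw [← h3, ← mul_assoc, h1, zero_mul]
  have hQ1 : Q = 1 := (sub_eq_zero.1 hQ1).symm
  refine ⟨φ, x', fun k => x (φ k) * (1 - E (φ k)), fun k => x (φ k) * E (φ (k + 1)), F, hφ, hx'M,
    fun k => mul_mem (hx _) (sub_mem (one_mem M) (hEM _)), fun k => mul_mem (hx _) (hEM _), hFM,
    ?_, ?_, ?_, fun k => rp_proj _, hFanti, ?_, ?_⟩
  · intro k
    simp only [hx', hD]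
    noncomm_ring
  · intro k
    refine (hEx _ _).trans ?_
    calc (2 : ℝ) ^ φ k * ‖x (φ k) * h‖ ≤ 2 ^ φ k * (1 / 4) ^ φ k := by gcongr; exact hh' _
      _ = (1 / 2) ^ φ k := by rw [← mul_pow]; norm_num
      _ ≤ (1 / 2) ^ k := pow_le_pow_of_le_one (by norm_num) (by norm_num) (hφ.le_apply)
  · intro k
    exact hnx2 k (φ k)
  · intro ζ
    have := (tendsto_const_nhds (x := ζ)).sub (hQ ζ)
    rw [hQ1] at this
    simpa using this
  · intro m k hmk
    have h1 : x' k = (d k)⁻¹ • (Y * E (φ m) * D k) := by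
      rw [mul_assoc, hED m k hmk, hYD, smul_smul, inv_mul_cancel₀ (hd0 k), one_smul]
    rw [h1, mul_smul_comm, ← mul_assoc, rp_mul]

end Core
end KVN

namespace KVN
open Filter Topology

section Gns
variable {H : Type} [NormedAddCommGroup H] [InnerProductSpace ℂ H] [CompleteSpace H]
variable {M : VonNeumannAlgebra H}

lemma star_smul' (c : ℂ) (x : ↥M) : star (c • x) = (starRingEnd ℂ c) • star x := by
  apply Subtype.ext
  change star (c • (x : H →L[ℂ] H)) = _
  rw [star_smul]; rfl

lemma smul_mul' (c : ℂ) (x y : ↥M) : (c • x) * y = c • (x * y) := by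
  apply Subtype.ext
  change (c • (x : H →L[ℂ] H)) * y = c • ((x : H →L[ℂ] H) * y)
  rw [smul_mul_assoc]

lemma mul_smul' (c : ℂ) (x y : ↥M) : x * (c • y) = c • (x * y) := by
  apply Subtype.ext
  change (x : H →L[ℂ] H) * (c • (y : H →L[ℂ] H)) = c • ((x : H →L[ℂ] H) * y)
  rw [mul_smul_comm]

lemma herm2 {h : ↥M →ₗ[ℂ] ℂ} (hp : VNIsPos h) (x y : ↥M) :
    h (star x * y) = starRingEnd ℂ (h (star y * x)) := by
  have im0 : ∀ z : ↥M, (h (star z * z)).im = 0 := fun z => ((Complex.nonneg_iff.1 (hp z)).2).symm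
  have h1 := im0 (x + y)
  have h2 := im0 (x + Complex.I • y)
  rw [star_add, add_mul, mul_add, mul_add, map_add, map_add, map_add] at h1 h2
  rw [star_smul', smul_mul', smul_mul', mul_smul', mul_smul', map_smul, map_smul, map_smul,
    map_smul] at h2
  have hx := im0 x
  have hy := im0 y
  simp at h1 h2
  apply Complex.ext
  · simp; linarith
  · simp; linarith

/-- Type synonym carrying the semi-inner product of a positive functional. -/
def Pre (h : ↥M →ₗ[ℂ] ℂ) (_hp : VNIsPos h) : Type := ↥M

instance (h : ↥M →ₗ[ℂ] ℂ) (hp : VNIsPos h) : AddCommGroup (Pre h hp) :=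
  inferInstanceAs (AddCommGroup ↥M)

noncomputable instance (h : ↥M →ₗ[ℂ] ℂ) (hp : VNIsPos h) : Module ℂ (Pre h hp) :=
  inferInstanceAs (Module ℂ ↥M)

/-- The semi-inner product. -/
noncomputable abbrev preCore (h : ↥M →ₗ[ℂ] ℂ) (hp : VNIsPos h) :
    PreInnerProductSpace.Core ℂ (Pre h hp) where
  inner a b := h (star (show ↥M from a) * (show ↥M from b))
  conj_inner_symm a b := (herm2 hp a b).symm
  re_inner_nonneg a := (Complex.nonneg_iff.1 (hp a)).1
  add_left a b c := by
    change h (star ((show ↥M from a) + (show ↥M from b)) * (show ↥M from c)) = _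
    rw [star_add, add_mul, map_add]
  smul_left a b r := by
    change h (star (r • (show ↥M from a)) * (show ↥M from b)) = _
    rw [star_smul', smul_mul', map_smul]; rfl

noncomputable instance (h : ↥M →ₗ[ℂ] ℂ) (hp : VNIsPos h) : SeminormedAddCommGroup (Pre h hp) :=
  InnerProductSpace.Core.toSeminormedAddCommGroup (c := preCore h hp)

noncomputable instance (h : ↥M →ₗ[ℂ] ℂ) (hp : VNIsPos h) : InnerProductSpace ℂ (Pre h hp) :=
  InnerProductSpace.ofCore (preCore h hp)

/-- The Hilbert space of a positive functional. -/
abbrev GK (h : ↥M →ₗ[ℂ] ℂ) (hp : VNIsPos h) : Type := UniformSpace.Completion (Pre h hp)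

/-- The canonical map. -/
noncomputable def gMap (h : ↥M →ₗ[ℂ] ℂ) (hp : VNIsPos h) : ↥M →ₗ[ℂ] GK h hp :=
  (UniformSpace.Completion.toComplL (𝕜 := ℂ) (E := Pre h hp)).toLinearMap.comp
    (show ↥M →ₗ[ℂ] Pre h hp from LinearMap.id)

lemma gMap_inner (h : ↥M →ₗ[ℂ] ℂ) (hp : VNIsPos h) (x y : ↥M) :
    inner ℂ (gMap h hp x) (gMap h hp y) = h (star x * y) := by
  change inner ℂ ((show Pre h hp from x : Pre h hp) : GK h hp)
    ((show Pre h hp from y : Pre h hp) : GK h hp) = _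
  rw [UniformSpace.Completion.inner_coe]; rfl

lemma gMap_dense (h : ↥M →ₗ[ℂ] ℂ) (hp : VNIsPos h) : DenseRange (gMap h hp) :=
  UniformSpace.Completion.denseRange_coe (α := Pre h hp)

lemma gMap_sq (h : ↥M →ₗ[ℂ] ℂ) (hp : VNIsPos h) (x : ↥M) :
    ((‖gMap h hp x‖ ^ 2 : ℝ) : ℂ) = h (star x * x) := by
  rw [← gMap_inner h hp, inner_self_eq_norm_sq_to_K]; norm_cast

lemma gMap_sqr (h : ↥M →ₗ[ℂ] ℂ) (hp : VNIsPos h) (x : ↥M) :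
    ‖gMap h hp x‖ ^ 2 = (h (star x * x)).re := by
  rw [← gMap_sq h hp, Complex.ofReal_re]

lemma pos_add {f g : ↥M →ₗ[ℂ] ℂ} (hf : VNIsPos f) (hg : VNIsPos g) : VNIsPos (f + g) := by
  intro x; exact add_nonneg (hf x) (hg x)

lemma normal_add {f g : ↥M →ₗ[ℂ] ℂ} (hf : VNIsPos f) (hfn : VNIsNormal f)
    (hg : VNIsPos g) (hgn : VNIsNormal g) : VNIsNormal (f + g) := by
  intro ι _ _ _ x s h1 h2 h3 h4 h5
  have A := hfn ι x s h1 h2 h3 h4 h5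
  have B := hgn ι x s h1 h2 h3 h4 h5
  have mono : ∀ {k : ↥M →ₗ[ℂ] ℂ}, VNIsPos k → ∀ i j, i ≤ j → k (x i) ≤ k (x j) := by
    intro k hk i j hij
    have := f_nonneg hk (x j - x i) (sub_nonneg.2 (opLE_iff.1 (h2 i j hij)))
    rwa [map_sub, sub_nonneg] at this
  constructor
  · rintro _ ⟨i, rfl⟩
    exact add_le_add (A.1 ⟨i, rfl⟩) (B.1 ⟨i, rfl⟩)
  · intro t ht
    change f s + g s ≤ t
    rw [← le_sub_iff_add_le]
    apply A.2
    rintro _ ⟨i, rfl⟩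
    change f (x i) ≤ _
    rw [le_sub_comm]
    apply B.2
    rintro _ ⟨j, rfl⟩
    change g (x j) ≤ _
    rw [le_sub_iff_add_le, add_comm]
    obtain ⟨k, hik, hjk⟩ := directed_of (· ≤ ·) i j
    exact (add_le_add (mono hf i k hik) (mono hg j k hjk)).trans (ht ⟨k, rfl⟩)

lemma normal_dom {f g : ↥M →ₗ[ℂ] ℂ} {α : ℝ} (hα : 0 < α) (hf : VNIsPos f)
    (hgn : VNIsNormal g) (hfg : VNLE f ((α : ℂ) • g)) : VNIsNormal f := by
  intro ι _ _ _ x s h1 h2 h3 h4 h5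
  have B := hgn ι x s h1 h2 h3 h4 h5
  constructor
  · rintro _ ⟨i, rfl⟩
    have := f_nonneg hf (s - x i) (sub_nonneg.2 (opLE_iff.1 (h4 i)))
    rwa [map_sub, sub_nonneg] at this
  · intro t ht
    have key : g s ≤ g s - (α⁻¹ : ℝ) * (f s - t) := by
      apply B.2
      rintro _ ⟨i, rfl⟩
      have := f_nonneg hfg (s - x i) (sub_nonneg.2 (opLE_iff.1 (h4 i)))
      simp only [LinearMap.sub_apply, LinearMap.smul_apply, smul_eq_mul, map_sub] at this
      have h6 : f (x i) ≤ t := ht ⟨i, rfl⟩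
      have h7 : 0 ≤ (α : ℂ) * (g s - g (x i)) - (f s - t) := by
        have := add_nonneg this (sub_nonneg.2 h6)
        convert this using 1; ring
      have h8 : (0 : ℂ) ≤ (α⁻¹ : ℝ) := by
        rw [Complex.zero_le_real]; positivity
      have h9 := mul_nonneg h8 h7
      have ha : (α : ℂ) ≠ 0 := by exact_mod_cast hα.ne'
      rw [← sub_nonneg]
      convert h9 using 1
      push_cast
      field_simp
      ring
    have h8 : (0 : ℂ) ≤ (α : ℝ) := by
      rw [Complex.zero_le_real]; positivity
    have h9 : 0 ≤ -((α⁻¹ : ℝ) * (f s - t)) := by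
      have := sub_nonneg.2 key
      convert this using 1; ring
    have h10 := mul_nonneg h8 h9
    have ha : (α : ℂ) ≠ 0 := by exact_mod_cast hα.ne'
    rw [← sub_nonneg]
    convert h10 using 1
    push_cast
    field_simp
    ring

end Gns

end KVN

namespace KVN
open Filter Topology

section GnsOps
variable {H : Type} [NormedAddCommGroup H] [InnerProductSpace ℂ H] [CompleteSpace H]
variable {M : VonNeumannAlgebra H}

lemma conj_bound (x : H →L[ℂ] H) (y : H →L[ℂ] H) :
    star (x * y) * (x * y) ≤ ((‖x‖ ^ 2 : ℝ) : ℂ) • (star y * y) := by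
  rw [le_iff]
  intro ζ
  rw [inner_star_mul, smul_apply, inner_smul_left, inner_star_mul,
    Complex.conj_ofReal, ← Complex.ofReal_mul, Complex.real_le_real]
  rw [← mul_pow, mul_ap]
  gcongr
  exact x.le_opNorm _

lemma gMap_mul_le (h : ↥M →ₗ[ℂ] ℂ) (hp : VNIsPos h) (x y : ↥M) :
    ‖gMap h hp (x * y)‖ ≤ ‖(x : H →L[ℂ] H)‖ * ‖gMap h hp y‖ := by
  rw [← sq_le_sq₀ (by positivity) (by positivity), mul_pow, gMap_sqr, gMap_sqr]
  have h1 := f_nonneg hp (((‖(x : H →L[ℂ] H)‖ ^ 2 : ℝ) : ℂ) • (star y * y) -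
    star (x * y) * (x * y)) (sub_nonneg.2 (conj_bound (x : H →L[ℂ] H) (y : H →L[ℂ] H)))
  rw [map_sub, map_smul, sub_nonneg] at h1
  have h2 := (Complex.le_def.1 h1).1
  rwa [smul_eq_mul, Complex.re_ofReal_mul] at h2

lemma exists_pi (h : ↥M →ₗ[ℂ] ℂ) (hp : VNIsPos h) (x : ↥M) :
    ∃ P : GK h hp →L[ℂ] GK h hp, ∀ y, P (gMap h hp y) = gMap h hp (x * y) := by
  let L : ↥M →ₗ[ℂ] ↥M :=
    { toFun := fun y => x * y
      map_add' := fun a b => mul_add _ _ _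
      map_smul' := fun c a => mul_smul' c x a }
  refine ⟨((gMap h hp).comp L).extendOfNorm (gMap h hp), fun y => ?_⟩
  exact LinearMap.extendOfNorm_eq (gMap_dense h hp)
    ⟨‖(x : H →L[ℂ] H)‖, fun y => gMap_mul_le h hp x y⟩ y

lemma pi_inner (h : ↥M →ₗ[ℂ] ℂ) (hp : VNIsPos h) (x : ↥M)
    (P : GK h hp →L[ℂ] GK h hp) (hP : ∀ y, P (gMap h hp y) = gMap h hp (x * y))
    (z : ↥M) (w : GK h hp) :
    inner ℂ (gMap h hp z) (P w) = inner ℂ (gMap h hp (star x * z)) w := by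
  have := (gMap_dense h hp).equalizer
    (g := fun w => inner ℂ (gMap h hp z) (P w))
    (h := fun w => inner ℂ (gMap h hp (star x * z)) w) (by fun_prop) (by fun_prop) (by
      funext y
      change inner ℂ (gMap h hp z) (P (gMap h hp y)) = inner ℂ (gMap h hp (star x * z)) (gMap h hp y)
      rw [hP, gMap_inner, gMap_inner, star_mul, star_star, mul_assoc])
  exact congrFun this w

lemma ext_dense (h : ↥M →ₗ[ℂ] ℂ) (hp : VNIsPos h) {w w' : GK h hp}
    (hw : ∀ z, inner ℂ (gMap h hp z) w = inner ℂ (gMap h hp z) w') : w = w' := by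
  apply ext_inner_left ℂ
  intro v
  have := (gMap_dense h hp).equalizer
    (g := fun v => inner ℂ v w)
    (h := fun v => inner ℂ v w') (by fun_prop) (by fun_prop) (by
      funext y; exact hw y)
  exact congrFun this v

lemma ext_dense_op (h : ↥M →ₗ[ℂ] ℂ) (hp : VNIsPos h) {A B : GK h hp →L[ℂ] GK h hp}
    (hw : ∀ z y, inner ℂ (gMap h hp z) (A (gMap h hp y)) =
      inner ℂ (gMap h hp z) (B (gMap h hp y))) : A = B := by
  have := (gMap_dense h hp).equalizer (g := A) (h := B) A.continuous B.continuous (by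
      funext y; exact ext_dense h hp fun z => hw z y)
  ext v
  exact congrFun this v

lemma pi_comm (h : ↥M →ₗ[ℂ] ℂ) (hp : VNIsPos h) (f : ↥M →ₗ[ℂ] ℂ) {T : GK h hp →L[ℂ] GK h hp}
    (hT : ∀ x y, inner ℂ (gMap h hp x) (T (gMap h hp y)) = f (star x * y)) (x : ↥M)
    (P : GK h hp →L[ℂ] GK h hp) (hP : ∀ y, P (gMap h hp y) = gMap h hp (x * y)) :
    Commute P T := by
  apply ext_dense_op h hp
  intro z y
  rw [mul_ap, mul_ap, pi_inner h hp x P hP, hP, hT, hT, star_mul, star_star, mul_assoc]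

lemma adj_bounds {K₁ K₂ : Type} [NormedAddCommGroup K₁] [InnerProductSpace ℂ K₁] [CompleteSpace K₁]
    [NormedAddCommGroup K₂] [InnerProductSpace ℂ K₂] [CompleteSpace K₂] (J : K₁ →L[ℂ] K₂)
    (hJ2 : ∀ w, ‖J w‖ ≤ ‖w‖) :
    0 ≤ (ContinuousLinearMap.adjoint J).comp J ∧ (ContinuousLinearMap.adjoint J).comp J ≤ 1 := by
  constructor
  · rw [nonneg_iff]
    intro ζ
    rw [ContinuousLinearMap.comp_apply, ContinuousLinearMap.adjoint_inner_left,
      inner_self_eq_norm_sq_to_K]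
    norm_cast; positivity
  · rw [le_iff]
    intro ζ
    rw [ContinuousLinearMap.comp_apply, ContinuousLinearMap.adjoint_inner_left,
      inner_self_eq_norm_sq_to_K]
    change _ ≤ inner ℂ ζ ζ
    rw [inner_self_eq_norm_sq_to_K]
    have := hJ2 ζ
    have h2 : ‖J ζ‖ ^ 2 ≤ ‖ζ‖ ^ 2 := by gcongr
    exact_mod_cast h2

lemma exists_T {f h : ↥M →ₗ[ℂ] ℂ} (hf : VNIsPos f) (hp : VNIsPos h)
    (hle : ∀ x, f (star x * x) ≤ h (star x * x)) :
    ∃ T : GK h hp →L[ℂ] GK h hp, 0 ≤ T ∧ T ≤ 1 ∧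
      ∀ x y, inner ℂ (gMap h hp x) (T (gMap h hp y)) = f (star x * y) := by
  have hb : ∀ x, ‖gMap f hf x‖ ≤ 1 * ‖gMap h hp x‖ := by
    intro x
    rw [one_mul, ← sq_le_sq₀ (by positivity) (by positivity), gMap_sqr, gMap_sqr]
    exact (Complex.le_def.1 (hle x)).1
  obtain ⟨J, hJ1, hJ2⟩ : ∃ J : GK h hp →L[ℂ] GK f hf, (∀ x, J (gMap h hp x) = gMap f hf x) ∧
      ∀ w, ‖J w‖ ≤ ‖w‖ := by
    refine ⟨(gMap f hf).extendOfNorm (gMap h hp), fun x =>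
      LinearMap.extendOfNorm_eq (gMap_dense _ hp) ⟨1, hb⟩ x, fun w => ?_⟩
    have := LinearMap.norm_extendOfNorm_apply_le (gMap_dense _ hp) 1 hb w
    rwa [one_mul] at this
  refine ⟨(ContinuousLinearMap.adjoint J).comp J, (adj_bounds J hJ2).1, (adj_bounds J hJ2).2, ?_⟩
  intro x y
  rw [ContinuousLinearMap.comp_apply, ContinuousLinearMap.adjoint_inner_right, hJ1, hJ1,
      gMap_inner]

end GnsOps

end KVN

namespace KVN
open Filter Topology

section PowOps
variable {K : Type} [NormedAddCommGroup K] [InnerProductSpace ℂ K] [CompleteSpace K]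

lemma pow_ops {T : K →L[ℂ] K} (h0 : 0 ≤ T) (h1 : T ≤ 1) :
    (∀ n, 0 ≤ T ^ n) ∧ (Antitone fun n => T ^ n) ∧ (∀ n, 0 ≤ T * (1 - T ^ n)) ∧
    (∀ n, T * (1 - T ^ n) ≤ T * (1 - T ^ (n + 1))) ∧
    (∀ n : ℕ, T * (1 - T ^ n) ≤ ((((n : ℝ) + 1 : ℝ)) : ℂ) • (1 - T)) := by
  have hG : 0 ≤ 1 - T := sub_nonneg.2 h1
  have p : ∀ n, 0 ≤ T ^ n := fun n => CStarAlgebra.pow_nonneg h0 n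
  have cG : ∀ n, Commute (T ^ n) (1 - T) := fun n =>
    ((Commute.one_right _).sub_right ((Commute.refl T).pow_left n))
  have anti : Antitone fun n => T ^ n := by
    apply antitone_nat_of_succ_le
    intro n
    rw [← sub_nonneg]
    have := (cG n).mul_nonneg (p n) hG
    rwa [mul_sub, mul_one, ← pow_succ] at this
  have q : ∀ n, 0 ≤ 1 - T ^ n := fun n => by
    have := anti (Nat.zero_le n)
    rw [sub_nonneg]; simpa using this
  have cq : ∀ n, Commute T (1 - T ^ n) := fun n =>
    ((Commute.one_right _).sub_right ((Commute.refl T).pow_right n))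
  have step : ∀ n, T * (1 - T ^ (n + 1)) - T * (1 - T ^ n) = T ^ (n + 1) * (1 - T) := by
    intro n
    rw [mul_sub, mul_sub, mul_sub, ← pow_succ', ← pow_succ', ← pow_succ, mul_one, mul_one]
    abel
  refine ⟨p, anti, fun n => (cq n).mul_nonneg h0 (q n), fun n => ?_, fun n => ?_⟩
  · rw [← sub_nonneg, step]
    exact (cG _).mul_nonneg (p _) hG
  · have main : ∀ n : ℕ, T * (1 - T ^ n) ≤ (n : ℂ) • (1 - T) := by
      intro n
      induction n with
      | zero => simp
      | succ n ih =>
        have a : T ^ (n + 1) * (1 - T) ≤ 1 - T := by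
          rw [← sub_nonneg]
          have c : Commute (1 - T ^ (n + 1)) (1 - T) := (Commute.one_left _).sub_left (cG _)
          have := c.mul_nonneg (q (n + 1)) hG
          rwa [sub_mul, one_mul] at this
        have b := add_le_add ih a
        rw [← step, add_sub_cancel] at b
        push_cast
        rwa [add_smul, one_smul]
    refine (main n).trans ?_
    push_cast
    rw [add_smul, one_smul]
    exact le_add_of_nonneg_right hG

lemma fix_zero {T : K →L[ℂ] K} (h0 : 0 ≤ T) (h1 : T ≤ 1) (hfix : ∀ η, T η = η → η = 0) (ζ : K) :
    Tendsto (fun n => (T ^ n) ζ) atTop (𝓝 0) := by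
  obtain ⟨p, anti, -⟩ := pow_ops h0 h1
  obtain ⟨b, hb, -⟩ := vig (fun n => T ^ n) p anti
  have h2 : Tendsto (fun n => (T ^ (n + 1)) ζ) atTop (𝓝 (b ζ)) := (hb ζ).comp (tendsto_add_atTop_nat 1)
  have h3 : Tendsto (fun n => T ((T ^ n) ζ)) atTop (𝓝 (T (b ζ))) :=
    (T.continuous.tendsto _).comp (hb ζ)
  have h4 : T (b ζ) = b ζ := by
    refine tendsto_nhds_unique h3 (h2.congr fun n => ?_)
    rw [pow_succ', mul_ap]
  have := hb ζ
  rwa [hfix _ h4] at this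

end PowOps

section Direct
variable {H : Type} [NormedAddCommGroup H] [InnerProductSpace ℂ H] [CompleteSpace H]
variable {M : VonNeumannAlgebra H}

lemma no_fix {f g h : ↥M →ₗ[ℂ] ℂ} (hfin : VNFinite M) (hg : VNIsPos g) (hgn : VNIsNormal g)
    (hgf : Faithful g) (hp : VNIsPos h) (hn : VNIsNormal h) (hs : ∀ x, h x = f x + g x)
    {T : GK h hp →L[ℂ] GK h hp} (h0 : 0 ≤ T) (h1 : T ≤ 1)
    (hT : ∀ x y, inner ℂ (gMap h hp x) (T (gMap h hp y)) = f (star x * y))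
    (η : GK h hp) (hη : T η = η) : η = 0 := by
  have hgT : ∀ x : ↥M, ev g (star (x : H →L[ℂ] H) * (x : H →L[ℂ] H)) ≤ ‖gMap h hp x - η‖ ^ 2 := by
    intro x
    have e1 : ev g (star (x : H →L[ℂ] H) * (x : H →L[ℂ] H)) = (g (star x * x)).re :=
      ev_coe g (star x * x)
    have e2 : g (star x * x) = inner ℂ (gMap h hp x) ((1 - T) (gMap h hp x)) := by
      have e3 : (1 - T) (gMap h hp x) = gMap h hp x - T (gMap h hp x) := rfl
      rw [e3, inner_sub_right, hT, gMap_inner, hs]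
      ring
    have hsa : IsSelfAdjoint (1 - T) := (sub_nonneg.2 h1).isSelfAdjoint
    have e4 : (1 - T) (gMap h hp x) = (1 - T) (gMap h hp x - η) := by
      rw [map_sub]
      have : (1 - T) η = η - T η := rfl
      rw [this, hη, sub_self, sub_zero]
    have e5 : ∀ w, inner ℂ (gMap h hp x) ((1 - T) w) = inner ℂ (gMap h hp x - η) ((1 - T) w) := by
      intro w
      rw [← star_inner, ← star_inner, hsa.star_eq, e4]
    rw [e1, e2, e5, e4]
    have e6 : inner ℂ (gMap h hp x - η) ((1 - T) (gMap h hp x - η)) ≤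
        inner ℂ (gMap h hp x - η) (gMap h hp x - η) := by
      have := nonneg_iff.1 h0 (gMap h hp x - η)
      have e7 : (1 - T) (gMap h hp x - η) = (gMap h hp x - η) - T (gMap h hp x - η) := rfl
      rw [e7, inner_sub_right]
      rw [sub_le_self_iff, ← star_inner, h0.isSelfAdjoint.star_eq]
      exact this
    have e8 := (Complex.le_def.1 e6).1
    rw [inner_self_eq_norm_sq_to_K] at e8
    refine e8.trans (le_of_eq ?_)
    norm_cast
  -- approximating sequence
  have hz : ∀ k : ℕ, ∃ z : ↥M, ‖gMap h hp z - η‖ ≤ (1 / 32) ^ k := by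
    intro k
    obtain ⟨z, hz⟩ := (gMap_dense h hp).exists_dist_lt η (ε := (1 / 32) ^ k) (by positivity)
    refine ⟨z, ?_⟩
    rw [← dist_eq_norm, dist_comm]; exact hz.le
  choose z hz using hz
  obtain ⟨φ, x', u, v, F, hφ, hx', hu, hv, hF, hdec, hun, hvn, hFp, hFa, hF0, hFx⟩ :=
    core hfin hg hgn hgf hp hn (fun k => (z k : H →L[ℂ] H)) (fun k => (z k).2) (by
      intro k
      refine (hgT (z k)).trans ?_
      have a : ((1 : ℝ) / 32) ^ k ≤ 1 := pow_le_one₀ (by norm_num) (by norm_num)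
      have b := hz k
      have c : 0 ≤ ‖gMap h hp (z k) - η‖ := norm_nonneg _
      nlinarith)
  let X : ℕ → ↥M := fun k => ⟨x' k, hx' k⟩
  let U : ℕ → ↥M := fun k => ⟨u k, hu k⟩
  let V : ℕ → ↥M := fun k => ⟨v k, hv k⟩
  let Fm : ℕ → ↥M := fun k => ⟨F k, hF k⟩
  have hX : ∀ k, X k = z (φ k) - U k - V k := by
    intro k
    apply Subtype.ext
    change x' k = (z (φ k) : H →L[ℂ] H) - u k - v k
    have := hdec k
    rw [this]; abel
  have tz : Tendsto (fun k => gMap h hp (z (φ k))) atTop (𝓝 η) := by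
    rw [tendsto_iff_norm_sub_tendsto_zero]
    have t0 : Tendsto (fun k : ℕ => ((1 : ℝ) / 32) ^ k) atTop (𝓝 0) :=
      tendsto_pow_atTop_nhds_zero_of_lt_one (by norm_num) (by norm_num)
    exact squeeze_zero (fun k => norm_nonneg _) (fun k => hz (φ k)) (t0.comp hφ.tendsto_atTop)
  have t2 : Tendsto (fun k : ℕ => ((1 : ℝ) / 2) ^ k) atTop (𝓝 0) :=
    tendsto_pow_atTop_nhds_zero_of_lt_one (by norm_num) (by norm_num)
  have tu : Tendsto (fun k => gMap h hp (U k)) atTop (𝓝 0) := by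
    rw [tendsto_zero_iff_norm_tendsto_zero]
    refine squeeze_zero (fun k => norm_nonneg _) (g := fun k => (1 / 2) ^ k * ‖gMap h hp 1‖)
      (fun k => ?_) ?_
    · have := gMap_mul_le h hp (U k) 1
      rw [mul_one] at this
      refine this.trans ?_
      gcongr
      exact hun k
    · simpa using t2.mul_const ‖gMap h hp 1‖
  have tv : Tendsto (fun k => gMap h hp (V k)) atTop (𝓝 0) := by
    rw [tendsto_zero_iff_norm_tendsto_zero]
    have : Tendsto (fun k => ‖gMap h hp (V k)‖ ^ 2) atTop (𝓝 0) := by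
      refine squeeze_zero (fun k => by positivity) (fun k => ?_) t2
      rw [gMap_sqr, ← ev_coe h (star (V k) * V k)]
      exact hvn k
    have h3 := (Real.continuous_sqrt.tendsto 0).comp this
    rw [Real.sqrt_zero] at h3
    refine h3.congr fun k => ?_
    exact Real.sqrt_sq (norm_nonneg _)
  have tx : Tendsto (fun k => gMap h hp (X k)) atTop (𝓝 η) := by
    have := (tz.sub tu).sub tv
    rw [sub_zero, sub_zero] at this
    refine this.congr fun k => ?_
    rw [hX, map_sub, map_sub]
  apply ext_dense h hp
  intro y
  rw [inner_zero_right]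
  have key : ∀ m, inner ℂ (gMap h hp y) η = inner ℂ (gMap h hp (Fm m * y)) η := by
    intro m
    obtain ⟨P, hP⟩ := exists_pi h hp (Fm m)
    have hPη : P η = η := by
      refine tendsto_nhds_unique ((P.continuous.tendsto η).comp tx) ?_
      refine tx.congr' ?_
      filter_upwards [eventually_ge_atTop m] with k hk
      change _ = P (gMap h hp (X k))
      rw [hP]
      congr 1
      apply Subtype.ext
      exact (hFx m k hk).symm
    have sF : star (Fm m) = Fm m := Subtype.ext (hFp m).isSelfAdjoint
    calc inner ℂ (gMap h hp y) η = inner ℂ (gMap h hp y) (P η) := by rw [hPη]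
      _ = _ := by rw [pi_inner h hp (Fm m) P hP, sF]
  have tF : Tendsto (fun m => gMap h hp (Fm m * y)) atTop (𝓝 0) := by
    rw [tendsto_zero_iff_norm_tendsto_zero]
    have : Tendsto (fun k => ‖gMap h hp (Fm k * y)‖ ^ 2) atTop (𝓝 0) := by
      have e := ev_tendsto_anti hp hn (x := fun k => star (y : H →L[ℂ] H) * F k * y) (y := 0)
        (fun k => mul_mem (mul_mem (star_mem y.2) (hF k)) y.2) (zero_mem _)
        (fun i j hij => star_left_conjugate_le_conjugate (hFa hij) _) (fun ζ => by
          have := ((star (y : H →L[ℂ] H)).continuous.tendsto _).comp (hF0 ((y : H →L[ℂ] H) ζ))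
          rw [map_zero] at this
          exact this)
      rw [ev_zero] at e
      refine e.congr fun k => ?_
      rw [gMap_sqr, ← ev_coe h (star (Fm k * y) * (Fm k * y))]
      congr 1
      change _ = star (F k * (y : H →L[ℂ] H)) * (F k * y)
      have i1 : star (F k) = F k := (hFp k).isSelfAdjoint
      have i2 : F k * F k = F k := (hFp k).isIdempotentElem
      rw [star_mul, i1, mul_assoc, mul_assoc, ← mul_assoc (F k), i2]
    have h3 := (Real.continuous_sqrt.tendsto 0).comp this
    rw [Real.sqrt_zero] at h3
    refine h3.congr fun k => ?_
    exact Real.sqrt_sq (norm_nonneg _)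
  have t5 : Tendsto (fun m => inner ℂ (gMap h hp (Fm m * y)) η) atTop (𝓝 (inner ℂ 0 η)) :=
    tF.inner tendsto_const_nhds
  rw [inner_zero_left] at t5
  exact tendsto_nhds_unique (tendsto_const_nhds.congr key) t5

end Direct

end KVN

namespace KVN
open Filter Topology

section DirectMain
variable {H : Type} [NormedAddCommGroup H] [InnerProductSpace ℂ H] [CompleteSpace H]
variable {M : VonNeumannAlgebra H}

/-- The functional attached to an operator on the GNS space. -/
noncomputable def opF (h : ↥M →ₗ[ℂ] ℂ) (hp : VNIsPos h) (B : GK h hp →L[ℂ] GK h hp) :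
    ↥M →ₗ[ℂ] ℂ where
  toFun x := inner ℂ (gMap h hp 1) (B (gMap h hp x))
  map_add' x y := by rw [map_add, map_add, inner_add_right]
  map_smul' c x := by rw [map_smul, map_smul, inner_smul_right]; rfl

lemma opF_pos (h : ↥M →ₗ[ℂ] ℂ) (hp : VNIsPos h) {B : GK h hp →L[ℂ] GK h hp} (hB : 0 ≤ B)
    (x : ↥M) : 0 ≤ inner ℂ (gMap h hp x) (B (gMap h hp x)) := by
  rw [← star_inner, hB.isSelfAdjoint.star_eq]
  exact nonneg_iff.1 hB _

lemma opF_apply (h : ↥M →ₗ[ℂ] ℂ) (hp : VNIsPos h) (f : ↥M →ₗ[ℂ] ℂ)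
    {T B : GK h hp →L[ℂ] GK h hp}
    (hT : ∀ x y, inner ℂ (gMap h hp x) (T (gMap h hp y)) = f (star x * y))
    (hB : ∀ P, Commute P T → Commute P B) (x y : ↥M) :
    opF h hp B (star x * y) = inner ℂ (gMap h hp x) (B (gMap h hp y)) := by
  change inner ℂ (gMap h hp 1) (B (gMap h hp (star x * y))) = _
  obtain ⟨P, hP⟩ := exists_pi h hp (star x)
  have c := hB P (pi_comm h hp f hT (star x) P hP)
  rw [← hP, ← mul_ap, ← c.eq, mul_ap, pi_inner h hp (star x) P hP, star_star, mul_one]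

theorem direct {f g : ↥M →ₗ[ℂ] ℂ} (hfin : VNFinite M) (hg : VNIsPos g) (hgn : VNIsNormal g)
    (hgf : Faithful g) (hf : VNIsPos f) (hfn : VNIsNormal f) : VNAbsCont f g := by
  obtain ⟨h, hs⟩ : ∃ h : ↥M →ₗ[ℂ] ℂ, h = f + g := ⟨_, rfl⟩
  have hp : VNIsPos h := hs ▸ pos_add hf hg
  have hn : VNIsNormal h := hs ▸ normal_add hf hfn hg hgn
  have hs' : ∀ x, h x = f x + g x := fun x => by rw [hs]; rfl
  obtain ⟨T, h0, h1, hT⟩ := exists_T hf hp (fun x => by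
    rw [hs']; exact le_add_of_nonneg_right (hg x))
  have hfix := fix_zero h0 h1 (no_fix hfin hg hgn hgf hp hn hs' h0 h1 hT)
  obtain ⟨p, anti, b0, b1, b2⟩ := pow_ops h0 h1
  have hc : ∀ n, ∀ P, Commute P T → Commute P (T * (1 - T ^ n)) := fun n P hP =>
    hP.mul_right ((Commute.one_right _).sub_right (hP.pow_right n))
  have hap : ∀ n x y, opF h hp (T * (1 - T ^ n)) (star x * y) =
      inner ℂ (gMap h hp x) ((T * (1 - T ^ n)) (gMap h hp y)) := fun n x y =>
    opF_apply h hp f hT (hc n) x y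
  have hpos : ∀ n, VNIsPos (opF h hp (T * (1 - T ^ n))) := fun n x => by
    rw [hap]; exact opF_pos h hp (b0 n) x
  have hG : ∀ x y, g (star x * y) = inner ℂ (gMap h hp x) ((1 - T) (gMap h hp y)) := by
    intro x y
    have e3 : (1 - T) (gMap h hp y) = gMap h hp y - T (gMap h hp y) := rfl
    rw [e3, inner_sub_right, hT, gMap_inner, hs']
    ring
  have hα : ∀ n : ℕ, (0 : ℝ) < (n : ℝ) + 1 := fun n => by positivity
  have hdom : ∀ n : ℕ, VNLE (opF h hp (T * (1 - T ^ n))) ((((n : ℝ) + 1 : ℝ) : ℂ) • g) := by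
    intro n x
    have := opF_pos h hp (sub_nonneg.2 (b2 n)) x
    rw [sub_apply, inner_sub_right, ← hap, smul_apply,
      inner_smul_right, ← hG] at this
    exact this
  refine ⟨fun n => opF h hp (T * (1 - T ^ n)), fun n => (n : ℝ) + 1,
    fun n => ⟨hpos n, normal_dom (hα n) (hpos n) hgn (hdom n)⟩, hα, ?_, hdom, ?_⟩
  · intro n x
    have := opF_pos h hp (sub_nonneg.2 (b1 n)) x
    rw [sub_apply, inner_sub_right, ← hap, ← hap] at this
    exact this
  · intro x
    have e : f x = inner ℂ (gMap h hp 1) (T (gMap h hp x - 0)) := by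
      rw [sub_zero, hT, star_one, one_mul]
    rw [e]
    refine Tendsto.inner tendsto_const_nhds ?_
    exact (T.continuous.tendsto _).comp (tendsto_const_nhds.sub (hfix (gMap h hp x)))

end DirectMain

end KVN

namespace KVN
open Filter Topology

section Converse
variable {H : Type} [NormedAddCommGroup H] [InnerProductSpace ℂ H] [CompleteSpace H]
variable {M : VonNeumannAlgebra H}

lemma abs_le {f g : ↥M →ₗ[ℂ] ℂ} (hf : VNIsPos f) (hg : VNIsPos g) (hac : VNAbsCont f g)
    (x : ℕ → ↥M) (hx : Tendsto (fun n => ‖gMap g hg (x n)‖) atTop (𝓝 0))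
    (hd : ∀ n m, ‖gMap f hf (x n - x m)‖ = ‖gMap g hg (x n - x m)‖) (m : ℕ) :
    ‖gMap f hf (x m)‖ ≤ ‖gMap g hg (x m)‖ := by
  obtain ⟨fn, α, hfn, hα, hmono, hdom, hlim⟩ := hac
  have hre : ∀ z, Tendsto (fun j => (fn j z).re) atTop (𝓝 (f z).re) := fun z =>
    (Complex.continuous_re.tendsto _).comp (hlim z)
  have hm : ∀ z : ↥M, Monotone fun j => (fn j (star z * z)).re := by
    intro z
    apply monotone_nat_of_le_succ
    intro j
    have := (Complex.le_def.1 (hmono j z)).1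
    simpa using this
  have hle : ∀ j z, ‖gMap (fn j) (hfn j).1 z‖ ≤ ‖gMap f hf z‖ := by
    intro j z
    rw [← sq_le_sq₀ (by positivity) (by positivity), gMap_sqr, gMap_sqr]
    exact (hm z).ge_of_tendsto (hre _) j
  have hsm : ∀ j z, ‖gMap (fn j) (hfn j).1 z‖ ≤ Real.sqrt (α j) * ‖gMap g hg z‖ := by
    intro j z
    rw [← sq_le_sq₀ (by positivity) (by positivity), mul_pow, Real.sq_sqrt (hα j).le,
      gMap_sqr, gMap_sqr]
    have := (Complex.le_def.1 (hdom j z)).1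
    simpa using this
  have hj : ∀ j, ‖gMap (fn j) (hfn j).1 (x m)‖ ≤ ‖gMap g hg (x m)‖ := by
    intro j
    have t : Tendsto (fun n => Real.sqrt (α j) * ‖gMap g hg (x n)‖ +
        (‖gMap g hg (x m)‖ + ‖gMap g hg (x n)‖)) atTop
        (𝓝 (Real.sqrt (α j) * 0 + (‖gMap g hg (x m)‖ + 0))) :=
      (hx.const_mul _).add (tendsto_const_nhds.add hx)
    rw [mul_zero, zero_add, add_zero] at t
    refine ge_of_tendsto' t fun n => ?_
    have e : gMap (fn j) (hfn j).1 (x m) = gMap (fn j) (hfn j).1 (x n) +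
        gMap (fn j) (hfn j).1 (x m - x n) := by rw [map_sub]; abel
    rw [e]
    refine (norm_add_le _ _).trans (add_le_add (hsm j _) ?_)
    refine (hle j _).trans ?_
    rw [hd, map_sub]
    exact norm_sub_le _ _
  rw [← sq_le_sq₀ (by positivity) (by positivity), gMap_sqr]
  refine le_of_tendsto' (hre _) fun j => ?_
  rw [← gMap_sqr _ (hfn j).1]
  have := hj j
  gcongr

/-- Conjugation by `a`. -/
noncomputable def conjF (g : ↥M →ₗ[ℂ] ℂ) (a : ↥M) : ↥M →ₗ[ℂ] ℂ where
  toFun z := g (star a * z * a)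
  map_add' x y := by rw [mul_add, add_mul, map_add]
  map_smul' c x := by rw [mul_smul', smul_mul', map_smul]; rfl

lemma conjF_pos {g : ↥M →ₗ[ℂ] ℂ} (hg : VNIsPos g) (a : ↥M) : VNIsPos (conjF g a) := by
  intro x
  have := hg (x * a)
  rw [star_mul] at this
  change 0 ≤ g (star a * (star x * x) * a)
  convert this using 2
  simp only [mul_assoc]

lemma conjF_norm {g : ↥M →ₗ[ℂ] ℂ} (hg : VNIsPos g) (a z : ↥M) :
    ‖gMap (conjF g a) (conjF_pos hg a) z‖ = ‖gMap g hg (z * a)‖ := by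
  rw [← sq_eq_sq₀ (by positivity) (by positivity), gMap_sqr, gMap_sqr]
  change (g (star a * (star z * z) * a)).re = _
  rw [star_mul]
  simp only [mul_assoc]

lemma conjF_normal {g : ↥M →ₗ[ℂ] ℂ} (hgn : VNIsNormal g) (a b : ↥M) (hab : a * b = 1)
    (hba : b * a = 1) : VNIsNormal (conjF g a) := by
  intro ι _ _ _ x s h1 h2 ⟨C, h3⟩ h4 h5
  have cle : ∀ (c : ↥M) {p q : ↥M}, (p : H →L[ℂ] H) ≤ q →
      ((star c * p * c : ↥M) : H →L[ℂ] H) ≤ ((star c * q * c : ↥M) : H →L[ℂ] H) :=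
    fun c p q hpq => star_left_conjugate_le_conjugate hpq (c : H →L[ℂ] H)
  refine hgn ι (fun i => star a * x i * a) (star a * s * a) ?_ ?_ ?_ ?_ ?_
  · intro i
    have := cle a (p := 0) (q := x i) (ContinuousLinearMap.nonneg_iff_isPositive _ |>.2 (h1 i))
    rw [mul_zero, zero_mul] at this
    exact ContinuousLinearMap.nonneg_iff_isPositive _ |>.1 this
  · intro i j hij
    exact opLE_iff.2 (cle a (opLE_iff.1 (h2 i j hij)))
  · refine ⟨‖star (a : H →L[ℂ] H)‖ * C * ‖(a : H →L[ℂ] H)‖, fun i => ?_⟩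
    change ‖star (a : H →L[ℂ] H) * (x i : H →L[ℂ] H) * (a : H →L[ℂ] H)‖ ≤ _
    refine (norm_mul_le _ _).trans ?_
    gcongr
    refine (norm_mul_le _ _).trans ?_
    gcongr
    exact h3 i
  · intro i
    exact opLE_iff.2 (cle a (opLE_iff.1 (h4 i)))
  · intro y hy
    have hsab : star b * star a = 1 := by rw [← star_mul, hab, star_one]
    have hsba : star a * star b = 1 := by rw [← star_mul, hba, star_one]
    have canc : ∀ z : ↥M, star b * (star a * z * a) * b = z := fun z => by
      rw [mul_assoc (star a), ← mul_assoc (star b), hsab, one_mul, mul_assoc, hab, mul_one]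
    have canc' : ∀ z : ↥M, star a * (star b * z * b) * a = z := fun z => by
      rw [mul_assoc (star b), ← mul_assoc (star a), hsba, one_mul, mul_assoc, hba, mul_one]
    have := h5 (star b * y * b) (fun i => by
      have := cle b (opLE_iff.1 (hy i))
      rw [canc] at this
      exact opLE_iff.2 this)
    have := cle a (opLE_iff.1 this)
    rw [canc'] at this
    exact opLE_iff.2 this

/-- An element `1 + y` of `M` with `‖y‖ < 1` has an inverse in `M`. -/
lemma exists_inv {y : H →L[ℂ] H} (hy : y ∈ M) (hn : ‖y‖ < 1) :
    ∃ b : H →L[ℂ] H, b ∈ M ∧ (1 + y) * b = 1 ∧ b * (1 + y) = 1 := by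
  let U := Units.oneSub (-y) (by rwa [norm_neg])
  have hU : (U : H →L[ℂ] H) = 1 + y := by
    change 1 - (-y) = 1 + y
    rw [sub_neg_eq_add]
  refine ⟨(U⁻¹ : (H →L[ℂ] H)ˣ), ?_, ?_, ?_⟩
  · rw [mem_iff]
    have hm : (1 + y) ∈ M := add_mem (one_mem _) hy
    rw [mem_iff] at hm
    intro t ht
    have hc : Commute t (U : H →L[ℂ] H) := by rw [hU]; exact hm t ht
    exact hc.units_inv_right
  · rw [← hU, Units.mul_inv]
  · rw [← hU, Units.inv_mul]

section Ring
variable {A : Type} [Ring A] [StarRing A]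

lemma shift_facts {v : A} (hv : star v * v = 1) :
    star (1 - v * star v) = 1 - v * star v ∧
    (1 - v * star v) * (1 - v * star v) = 1 - v * star v ∧ (1 - v * star v) * v = 0 := by
  have h3 : (1 - v * star v) * v = 0 := by
    rw [sub_mul, one_mul, mul_assoc, hv, mul_one, sub_self]
  refine ⟨?_, ?_, h3⟩
  · rw [star_sub, star_mul, star_star, star_one]
  · rw [mul_sub, ← mul_assoc, h3, zero_mul, mul_one, sub_zero]

lemma shift_pow {v : A} (hv : star v * v = 1) (n : ℕ) : star (v ^ n) * v ^ n = 1 := by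
  induction n with
  | zero => simp
  | succ n ih => rw [pow_succ, star_mul, mul_assoc, ← mul_assoc (star (v ^ n)), ih, one_mul, hv]

lemma shift_lt {v : A} (hv : star v * v = 1) {j k : ℕ} (h : j < k) :
    star (v ^ j * (1 - v * star v)) * (v ^ k * (1 - v * star v)) = 0 := by
  obtain ⟨d, rfl⟩ := Nat.exists_eq_add_of_lt h
  obtain ⟨h1, h2, h3⟩ := shift_facts hv
  rw [star_mul, h1, add_assoc, pow_add, mul_assoc, mul_assoc (v ^ j), ← mul_assoc (star (v ^ j)),
    shift_pow hv, one_mul, pow_succ', ← mul_assoc, ← mul_assoc, h3, zero_mul, zero_mul]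

lemma shift_ne {v : A} (hv : star v * v = 1) {j k : ℕ} (h : j ≠ k) :
    star (v ^ j * (1 - v * star v)) * (v ^ k * (1 - v * star v)) = 0 := by
  rcases lt_or_gt_of_ne h with h | h
  · exact shift_lt hv h
  · have := congrArg star (shift_lt hv h)
    rwa [star_mul, star_star, star_zero] at this

lemma shift_eq {v : A} (hv : star v * v = 1) (j : ℕ) :
    star (v ^ j * (1 - v * star v)) * (v ^ j * (1 - v * star v)) = 1 - v * star v := by
  obtain ⟨h1, h2, h3⟩ := shift_facts hv
  rw [star_mul, h1, mul_assoc, ← mul_assoc (star (v ^ j)), shift_pow hv, one_mul, h2]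

lemma shift_proj {v : A} (hv : star v * v = 1) (j : ℕ) :
    (v ^ j * (1 - v * star v)) * star (v ^ j * (1 - v * star v)) =
      v ^ j * star (v ^ j) - v ^ (j + 1) * star (v ^ (j + 1)) := by
  obtain ⟨h1, h2, h3⟩ := shift_facts hv
  rw [star_mul, h1, mul_assoc, ← mul_assoc (1 - v * star v), h2, sub_mul, mul_sub, one_mul,
    pow_succ, star_mul]
  simp only [mul_assoc]

end Ring

lemma shift_tendsto {g : ↥M →ₗ[ℂ] ℂ} (hg : VNIsPos g) {v : ↥M} (hv : star v * v = 1) :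
    Tendsto (fun k => ‖gMap g hg (star (v ^ k * (1 - v * star v)))‖) atTop (𝓝 0) := by
  have e : ∀ k, ‖gMap g hg (star (v ^ k * (1 - v * star v)))‖ ^ 2 =
      ‖gMap g hg (star (v ^ k))‖ ^ 2 - ‖gMap g hg (star (v ^ (k + 1)))‖ ^ 2 := by
    intro k
    rw [gMap_sqr, gMap_sqr, gMap_sqr, star_star, star_star, star_star, shift_proj hv, map_sub,
      Complex.sub_re]
  have anti : Antitone fun k => ‖gMap g hg (star (v ^ k))‖ ^ 2 := by
    apply antitone_nat_of_succ_le
    intro k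
    have := e k
    have h2 := sq_nonneg ‖gMap g hg (star (v ^ k * (1 - v * star v)))‖
    linarith
  have hl := tendsto_atTop_ciInf anti ⟨0, by rintro _ ⟨k, rfl⟩; positivity⟩
  have h2 := hl.sub (hl.comp (tendsto_add_atTop_nat 1))
  rw [sub_self] at h2
  have h3 : Tendsto (fun k => ‖gMap g hg (star (v ^ k * (1 - v * star v)))‖ ^ 2) atTop (𝓝 0) :=
    h2.congr fun k => (e k).symm
  have h4 := (Real.continuous_sqrt.tendsto 0).comp h3
  rw [Real.sqrt_zero] at h4
  refine h4.congr fun k => ?_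
  exact Real.sqrt_sq (norm_nonneg _)

theorem converse {g : ↥M →ₗ[ℂ] ℂ} (hg : VNIsPos g) (hgn : VNIsNormal g) (hgf : Faithful g)
    (hall : ∀ f : ↥M →ₗ[ℂ] ℂ, VNIsPos f → VNIsNormal f → VNAbsCont f g) : VNFinite M := by
  intro v hv
  set e : ↥M := 1 - v * star v with he
  set w : ℕ → ↥M := fun k => v ^ k * e with hw
  obtain ⟨e1, e2, e3⟩ := shift_facts hv
  have hwn : ∀ k, ‖(w k : H →L[ℂ] H)‖ ≤ 1 := by
    intro k
    have h1 : star (w k : H →L[ℂ] H) * (w k : H →L[ℂ] H) = (e : H →L[ℂ] H) :=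
      congrArg Subtype.val (shift_eq hv k)
    have hep : IsStarProjection (e : H →L[ℂ] H) :=
      ⟨congrArg Subtype.val e2, congrArg Subtype.val e1⟩
    have h2 : ‖(w k : H →L[ℂ] H)‖ * ‖(w k : H →L[ℂ] H)‖ ≤ 1 := by
      rw [← CStarRing.norm_star_mul_self, h1]
      exact hep.norm_le
    nlinarith [norm_nonneg (w k : H →L[ℂ] H)]
  obtain ⟨φ, hφ, hφg⟩ := extraction_forall_of_eventually
    (P := fun n k => ‖gMap g hg (star (w k))‖ ≤ (1 / 8) ^ n) (fun n =>
      ((shift_tendsto hg hv).eventually_le_const (by positivity : (0 : ℝ) < (1 / 8) ^ n)))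
  -- the element `y`
  have hbound : ∀ n : ℕ, ‖(((1 / 4) ^ (n + 1) : ℝ) : ℂ) • (w (φ n) : H →L[ℂ] H)‖ ≤
      (1 / 4) ^ (n + 1) := by
    intro n
    rw [norm_smul, Complex.norm_real, Real.norm_of_nonneg (by positivity)]
    have := hwn (φ n)
    exact mul_le_of_le_one_right (by positivity) this
  have hgeo : HasSum (fun n : ℕ => ((1 : ℝ) / 4) ^ (n + 1)) (1 / 3) := by
    have := (hasSum_geometric_of_lt_one (r := (1 : ℝ) / 4) (by norm_num) (by norm_num)).mul_left
      ((1 : ℝ) / 4)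
    have e4 : (1 : ℝ) / 4 * (1 - 1 / 4)⁻¹ = 1 / 3 := by norm_num
    rw [e4] at this
    simpa only [pow_succ'] using this
  have hsum : Summable (fun n : ℕ => (((1 / 4) ^ (n + 1) : ℝ) : ℂ) • (w (φ n) : H →L[ℂ] H)) :=
    Summable.of_norm_bounded hgeo.summable hbound
  obtain ⟨y, hy⟩ := hsum
  have hyn : ‖y‖ < 1 := by
    have := tsum_of_norm_bounded hgeo hbound
    rw [hy.tsum_eq] at this
    linarith
  have hyM : y ∈ M := (isClosed_vN M).mem_of_tendsto hy (Eventually.of_forall fun s =>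
    sum_mem fun n _ => SMulMemClass.smul_mem _ (w (φ n)).2)
  obtain ⟨b, hbM, hb1, hb2⟩ := exists_inv hyM hyn
  set a : ↥M := 1 + ⟨y, hyM⟩ with ha
  have hn := conjF_normal hgn a ⟨b, hbM⟩ (Subtype.ext hb1) (Subtype.ext hb2)
  have hac := hall _ (conjF_pos hg a) hn
  set x : ℕ → ↥M := fun n => ((4 ^ (n + 1) : ℝ) : ℂ) • star (w (φ n)) with hx
  have hxy : ∀ n, x n * ⟨y, hyM⟩ = e := by
    intro n
    apply Subtype.ext
    change (((4 ^ (n + 1) : ℝ) : ℂ) • star (w (φ n) : H →L[ℂ] H)) * y = e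
    have h1 := hy.mul_left (((4 ^ (n + 1) : ℝ) : ℂ) • star (w (φ n) : H →L[ℂ] H))
    have h2 := hasSum_single (f := fun m => (((4 ^ (n + 1) : ℝ) : ℂ) • star (w (φ n) : H →L[ℂ] H)) *
      ((((1 / 4) ^ (m + 1) : ℝ) : ℂ) • (w (φ m) : H →L[ℂ] H))) n (by
        intro m hm
        have : star (w (φ n) : H →L[ℂ] H) * (w (φ m) : H →L[ℂ] H) = 0 :=
          congrArg Subtype.val (shift_ne hv (hφ.injective.ne hm.symm))
        rw [smul_mul_smul_comm, this, smul_zero])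
    rw [h1.unique h2]
    have : star (w (φ n) : H →L[ℂ] H) * (w (φ n) : H →L[ℂ] H) = e :=
      congrArg Subtype.val (shift_eq hv (φ n))
    rw [smul_mul_smul_comm, this, ← Complex.ofReal_mul, ← mul_pow]
    norm_num
  have hxa : ∀ n, x n * a = x n + e := fun n => by rw [ha, mul_add, mul_one, hxy]
  have hx0 : Tendsto (fun n => ‖gMap g hg (x n)‖) atTop (𝓝 0) := by
    have t2 : Tendsto (fun k : ℕ => 4 * ((1 : ℝ) / 2) ^ k) atTop (𝓝 (4 * 0)) :=
      (tendsto_pow_atTop_nhds_zero_of_lt_one (by norm_num) (by norm_num)).const_mul _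
    rw [mul_zero] at t2
    refine squeeze_zero (fun k => norm_nonneg _) (fun k => ?_) t2
    rw [hx]
    simp only
    rw [map_smul, norm_smul, Complex.norm_real, Real.norm_of_nonneg (by positivity)]
    calc (4 : ℝ) ^ (k + 1) * ‖gMap g hg (star (w (φ k)))‖ ≤ 4 ^ (k + 1) * (1 / 8) ^ k := by
          gcongr; exact hφg k
      _ = 4 * (1 / 2) ^ k := by
          rw [pow_succ', mul_assoc, ← mul_pow]; norm_num
  have key := abs_le (conjF_pos hg a) hg hac x hx0 (fun n m => by
    rw [conjF_norm, sub_mul, hxa, hxa, add_sub_add_right_eq_sub])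
  have key2 : ∀ m, ‖gMap g hg (x m) + gMap g hg e‖ ≤ ‖gMap g hg (x m)‖ := by
    intro m
    have := key m
    rwa [conjF_norm, hxa, map_add] at this
  have hx00 : Tendsto (fun n => gMap g hg (x n)) atTop (𝓝 0) :=
    tendsto_zero_iff_norm_tendsto_zero.2 hx0
  have fin : ‖0 + gMap g hg e‖ ≤ 0 :=
    le_of_tendsto_of_tendsto' (hx00.add_const _).norm hx0 key2
  have fin2 : gMap g hg e = 0 := by
    rw [zero_add] at fin
    exact norm_le_zero_iff.1 fin
  have fin3 : e = 0 := by
    apply hgf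
    rw [← gMap_sq g hg, fin2]; simp
  exact (sub_eq_zero.1 fin3).symm

end Converse

end KVN

/-- **Kosaki's theorem (Theorem 2.9)**: a von Neumann algebra `M` with a faithful normal
positive functional `𝔤` is finite iff every normal positive functional on `M` is
absolutely continuous with respect to `𝔤`. -/
theorem vN_finite_iff_forall_absCont
    {H : Type} [NormedAddCommGroup H] [InnerProductSpace ℂ H] [CompleteSpace H]
    (M : VonNeumannAlgebra H) (𝔤 : ↥M →ₗ[ℂ] ℂ)
    (h𝔤p : VNIsPos 𝔤) (h𝔤n : VNIsNormal 𝔤)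
    (h𝔤faithful : ∀ x : ↥M, 𝔤 (star x * x) = 0 → x = 0) :
    VNFinite M ↔
      ∀ 𝔣 : ↥M →ₗ[ℂ] ℂ, VNIsPos 𝔣 → VNIsNormal 𝔣 → VNAbsCont 𝔣 𝔤 := by
  exact ⟨fun hfin _ hf hfn => KVN.direct hfin h𝔤p h𝔤n h𝔤faithful hf hfn,
    fun hall => KVN.converse h𝔤p h𝔤n h𝔤faithful hall⟩
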